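/- arXiv:1303.0106 — 7 statements merged into one kernel-verified Lean document; each statement's English description precedes it below -/
import Mathlib

section
/- Let r ≥ 1 and 0 ≤ p ≤ r, and let A be a p×r matrix of real numbers with A(k,ℓ) ≥ 0 for all k,ℓ and A(k,k) = 1 for all 1 ≤ k ≤ p. Set b_k(λ) = Σ_{ℓ=1}^r A(k,ℓ)·λ_ℓ, γ(λ) = Π_{k=1}^p λ_k / b_k(λ), and δ_k = 1 if A(k,ℓ) = 0 for all ℓ > k and δ_k = 0 otherwise. Then for every sequence λ^{(m)} = (λ^{(m)}_1,…,λ^{(m)}_r) ∈ ℂ^r such that λ^{(m)}_j ≠ 0 for all m and all j, and λ^{(m)}_j / λ^{(m)}_{j+1} → 0 as m → ∞ for every 1 ≤ j ≤ r−1, the following hold: (i) for all sufficiently large m one has b_k(λ^{(m)}) ≠ 0 for every 1 ≤ k ≤ p; (ii) γ(λ^{(m)}) → Π_{k=1}^p δ_k as m → ∞. -/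
open Filter Finset in
theorem ratio_aux (r : ℕ) (L : ℕ → Fin r → ℂ) (hL0 : ∀ m j, L m j ≠ 0)
    (hLrat : ∀ (j : ℕ) (hj : j + 1 < r),
      Tendsto (fun m => L m ⟨j, by omega⟩ / L m ⟨j + 1, hj⟩) atTop (nhds 0))
    (i : ℕ) (hi : i < r) (d : ℕ) : ∀ (hd : i + d + 1 < r),
    Tendsto (fun m => L m ⟨i, hi⟩ / L m ⟨i + d + 1, hd⟩) atTop (nhds 0) := by
  induction d with
  | zero => intro hd; exact hLrat i hd
  | succ d ih =>
    intro hd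
    have h := (ih (by omega)).mul (hLrat (i + d + 1) hd)
    rw [mul_zero] at h
    refine h.congr fun m => ?_
    exact div_mul_div_cancel₀ (hL0 _ _)

open Filter Finset in
theorem ratio_lt (r : ℕ) (L : ℕ → Fin r → ℂ) (hL0 : ∀ m j, L m j ≠ 0)
    (hLrat : ∀ (j : ℕ) (hj : j + 1 < r),
      Tendsto (fun m => L m ⟨j, by omega⟩ / L m ⟨j + 1, hj⟩) atTop (nhds 0))
    (i j : Fin r) (hij : i < j) :
    Tendsto (fun m => L m i / L m j) atTop (nhds 0) := by
  obtain ⟨i, hi⟩ := i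
  obtain ⟨j, hj⟩ := j
  obtain ⟨d, rfl⟩ := Nat.exists_eq_add_of_lt (Fin.mk_lt_mk.mp hij)
  exact ratio_aux r L hL0 hLrat i hi d hj

open Filter Finset in
theorem factor_aux (r : ℕ) (L : ℕ → Fin r → ℂ) (hL0 : ∀ m j, L m j ≠ 0)
    (hLrat : ∀ (j : ℕ) (hj : j + 1 < r),
      Tendsto (fun m => L m ⟨j, by omega⟩ / L m ⟨j + 1, hj⟩) atTop (nhds 0))
    (a : Fin r → ℝ) (k : Fin r) (hk : a k = 1) :
    (∀ᶠ m in atTop, (∑ l, (a l : ℂ) * L m l) ≠ 0) ∧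
    ((∀ l, k < l → a l = 0) →
      Tendsto (fun m => L m k / ∑ l, (a l : ℂ) * L m l) atTop (nhds 1)) ∧
    ((¬ ∀ l, k < l → a l = 0) →
      Tendsto (fun m => L m k / ∑ l, (a l : ℂ) * L m l) atTop (nhds 0)) := by
  classical
  obtain ⟨n, hn, hmax⟩ := (univ.filter fun l => a l ≠ 0).exists_max_image id
    ⟨k, by simp [hk]⟩
  simp only [mem_filter, mem_univ, true_and, id] at hn hmax
  have hnC : (a n : ℂ) ≠ 0 := by exact_mod_cast hn
  have hb : Tendsto (fun m => (∑ l, (a l : ℂ) * L m l) / L m n) atTop (nhds (a n : ℂ)) := by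
    have h : Tendsto (fun m => ∑ l, (a l : ℂ) * (L m l / L m n)) atTop
        (nhds (∑ l, if l = n then (a n : ℂ) else 0)) := by
      refine tendsto_finsetSum _ fun l _ => ?_
      by_cases hl : l = n
      · subst hl
        simp [hL0]
      · rw [if_neg hl]
        by_cases h0 : a l = 0
        · simp [h0]
        · simpa using (ratio_lt r L hL0 hLrat l n
            (lt_of_le_of_ne (hmax l h0) hl)).const_mul (a l : ℂ)
    rw [sum_ite_eq' univ n, if_pos (mem_univ n)] at h
    refine h.congr fun m => ?_
    rw [sum_div]
    exact sum_congr rfl fun l _ => (mul_div_assoc _ _ _).symm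
  have hdiv : ∀ c : ℂ, Tendsto (fun m => L m k / L m n) atTop (nhds c) →
      Tendsto (fun m => L m k / ∑ l, (a l : ℂ) * L m l) atTop (nhds (c / (a n : ℂ))) := by
    intro c hc
    refine (hc.div hb hnC).congr fun m => ?_
    exact div_div_div_cancel_right₀ (hL0 m n) _ _
  have hkn : k ≤ n := hmax k (by simp [hk])
  refine ⟨?_, ?_, ?_⟩
  · filter_upwards [hb.eventually_ne hnC] with m hm h
    exact hm (by rw [h, zero_div])
  · intro h
    have : n = k := by
      by_contra hne
      exact hn (h n (lt_of_le_of_ne hkn (Ne.symm hne)))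
    subst this
    have := hdiv 1 (by simp [hL0])
    simpa [hk] using this
  · intro h
    push Not at h
    obtain ⟨l, hl, hal⟩ := h
    simpa using hdiv 0 (ratio_lt r L hL0 hLrat k n (lt_of_lt_of_le hl (hmax l hal)))

open Filter Finset in
/-- iterated-limit behaviour of the rational function
`γ(λ) = ∏_{k=1}^p λ_k / b_k(λ)` with `b_k(λ) = ∑_{ℓ=1}^r A(k,ℓ)λ_ℓ`,
along sequences with `λ_j/λ_{j+1} → 0`. -/
theorem stmt0 (r p : ℕ) (hr : 1 ≤ r) (hpr : p ≤ r)
    (A : Fin p → Fin r → ℝ)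
    (hA : ∀ k l, 0 ≤ A k l)
    (hdiag : ∀ k : Fin p, A k (Fin.castLE hpr k) = 1)
    (L : ℕ → Fin r → ℂ)
    (hL0 : ∀ m j, L m j ≠ 0)
    (hLrat : ∀ (j : ℕ) (hj : j + 1 < r),
      Tendsto (fun m => L m ⟨j, by omega⟩ / L m ⟨j + 1, hj⟩) atTop (nhds 0)) :
    (∀ᶠ m in atTop, ∀ k : Fin p, (∑ l, (A k l : ℂ) * L m l) ≠ 0) ∧
    Tendsto
      (fun m => ∏ k : Fin p,
        L m (Fin.castLE hpr k) / ∑ l, (A k l : ℂ) * L m l)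
      atTop
      (nhds (∏ k : Fin p,
        if ∀ l : Fin r, (k : ℕ) < (l : ℕ) → A k l = 0 then (1 : ℂ) else 0)) := by
  have H := fun k : Fin p =>
    factor_aux r L hL0 hLrat (A k) (Fin.castLE hpr k) (hdiag k)
  refine ⟨eventually_all.2 fun k => (H k).1, ?_⟩
  refine tendsto_finsetProd _ fun k _ => ?_
  split_ifs with h
  · exact (H k).2.1 fun l hl => h l hl
  · exact (H k).2.2 fun h' => h fun l hl => h' l hl
end

section
/- Let r ≥ 1, let 1 ≤ k ≤ r, and let a_1,…,a_r be nonnegative real numbers with a_k = 1. Define N, D : ℂ^{r−1} → ℂ by N(τ) = Π_{i=k}^{r−1} τ_i and D(τ) = Σ_{j=1}^{r} a_j · Π_{i=j}^{r−1} τ_i (where an empty product equals 1, so the j = r term is the constant a_r). Then there exist ε > 0 and a function g : ℂ^{r−1} → ℂ that is analytic on the open ball of radius ε centered at 0 such that g(τ)·D(τ) = N(τ) for all τ in that ball. -/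
open Finset in
/-- the quotient `(τ_k⋯τ_{r-1}) / (∑_j a_j τ_j⋯τ_{r-1})`
(1-indexed; here `k` and the coefficient index are 0-indexed via `Fin r`)
extends to a function analytic near the origin of `ℂ^{r-1}`. -/
theorem stmt2 (r : ℕ) (hr : 1 ≤ r) (k : Fin r)
    (a : Fin r → ℝ) (ha : ∀ j, 0 ≤ a j) (hak : a k = 1)
    (N D : (Fin (r - 1) → ℂ) → ℂ)
    (hN : ∀ τ, N τ = ∏ i ∈ univ.filter fun i : Fin (r - 1) => (k : ℕ) ≤ (i : ℕ), τ i)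
    (hD : ∀ τ, D τ = ∑ j : Fin r, (a j : ℂ) *
        ∏ i ∈ univ.filter fun i : Fin (r - 1) => (j : ℕ) ≤ (i : ℕ), τ i) :
    ∃ ε > (0 : ℝ), ∃ g : (Fin (r - 1) → ℂ) → ℂ,
      AnalyticOnNhd ℂ g (Metric.ball 0 ε) ∧
      ∀ τ ∈ Metric.ball (0 : Fin (r - 1) → ℂ) ε, g τ * D τ = N τ := by
  classical
  obtain ⟨m, hm, hmax⟩ := (univ.filter fun j : Fin r => a j ≠ 0).exists_max_image id
    ⟨k, by simp [hak]⟩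
  simp only [mem_filter, mem_univ, true_and, id] at hm hmax
  have hkm : k ≤ m := hmax k (by simp [hak])
  let Q : Fin r → (Fin (r - 1) → ℂ) → ℂ := fun j τ =>
    ∏ i ∈ univ.filter (fun i : Fin (r - 1) => (j : ℕ) ≤ (i : ℕ) ∧ (i : ℕ) < m), τ i
  let P : Fin r → (Fin (r - 1) → ℂ) → ℂ := fun j τ =>
    ∏ i ∈ univ.filter (fun i : Fin (r - 1) => (j : ℕ) ≤ (i : ℕ)), τ i
  have hPQ : ∀ j, j ≤ m → ∀ τ, P j τ = Q j τ * P m τ := by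
    intro j hj τ
    have hj' : (j : ℕ) ≤ m := hj
    simp only [P, Q]
    rw [← prod_union]
    · congr 1
      ext i
      simp only [mem_filter, mem_univ, true_and, mem_union]
      omega
    · rw [disjoint_left]
      intro i
      simp only [mem_filter, mem_univ, true_and]
      omega
  have hQan : ∀ j τ, AnalyticAt ℂ (Q j) τ := by
    intro j τ
    apply Finset.analyticAt_fun_prod
    intro i _
    exact (ContinuousLinearMap.proj (R := ℂ) (φ := fun _ : Fin (r - 1) => ℂ) i).analyticAt τ
  let U : (Fin (r - 1) → ℂ) → ℂ := fun τ => ∑ j : Fin r, (a j : ℂ) * Q j τ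
  have hUan : ∀ τ, AnalyticAt ℂ U τ := by
    intro τ
    apply Finset.analyticAt_fun_sum
    intro j _
    exact analyticAt_const.mul (hQan j τ)
  have hU0 : U 0 = a m := by
    simp only [U]
    rw [sum_eq_single m]
    · have : Q m 0 = 1 := by
        simp only [Q]
        apply prod_eq_one
        intro i hi
        simp only [mem_filter, mem_univ, true_and] at hi
        omega
      rw [this, mul_one]
    · intro j _ hj
      by_cases h : a j = 0
      · simp [h]
      · have h1 : j < m := lt_of_le_of_ne (hmax j h) hj
        have h2 : (j : ℕ) < m := h1
        have h3 := m.isLt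
        have : Q j 0 = 0 := by
          simp only [Q]
          apply prod_eq_zero (i := (⟨j, by omega⟩ : Fin (r - 1)))
          · simp [h1]
          · rfl
        rw [this, mul_zero]
    · simp
  have hDU : ∀ τ, D τ = U τ * P m τ := by
    intro τ
    rw [hD]
    simp only [U]
    rw [sum_mul]
    apply sum_congr rfl
    intro j _
    by_cases h : a j = 0
    · simp [h]
    · rw [mul_assoc, ← hPQ j (hmax j h)]
  have hne : ∀ᶠ τ in nhds (0 : Fin (r - 1) → ℂ), U τ ≠ 0 := by
    apply (hUan 0).continuousAt.eventually_ne
    rw [hU0]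
    exact_mod_cast hm
  obtain ⟨ε, hε, hb⟩ := Metric.eventually_nhds_iff_ball.1 hne
  refine ⟨ε, hε, fun τ => Q k τ / U τ, fun τ hτ => (hQan k τ).div (hUan τ) (hb τ hτ), ?_⟩
  intro τ hτ
  have h0 := hb τ hτ
  have h1 : N τ = Q k τ * P m τ := by
    rw [hN, ← hPQ k hkm]
  rw [hDU, h1]
  field_simp
end

section
/- Let r ≥ 1 and 0 ≤ p ≤ r, and let A be a p×r matrix of real numbers with A(k,ℓ) ≥ 0 for all k,ℓ and A(k,k) = 1 for all 1 ≤ k ≤ p. For 1 ≤ k ≤ p define N_k, D_k : ℂ^{r−1} → ℂ by N_k(τ) = Π_{i=k}^{r−1} τ_i and D_k(τ) = Σ_{j=1}^{r} A(k,j) · Π_{i=j}^{r−1} τ_i (empty products equal 1). Set δ_k = 1 if A(k,ℓ) = 0 for all ℓ > k and δ_k = 0 otherwise. Then there exist ε > 0 and a function g : ℂ^{r−1} → ℂ analytic on the open ball of radius ε centered at 0 such that g(τ)·Π_{k=1}^p D_k(τ) = Π_{k=1}^p N_k(τ) for all τ in that ball, and g(0) = Π_{k=1}^p δ_k. -/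
open Finset in
theorem stmt3_aux (r : ℕ) (k : Fin r) (a : Fin r → ℝ) (hk : a k = 1) :
    ∃ M E : (Fin (r - 1) → ℂ) → ℂ, (∀ τ, AnalyticAt ℂ M τ) ∧ (∀ τ, AnalyticAt ℂ E τ) ∧
      E 0 ≠ 0 ∧
      (∀ τ, M τ * (∑ j : Fin r, (a j : ℂ) *
        ∏ i ∈ univ.filter fun i : Fin (r - 1) => (j : ℕ) ≤ (i : ℕ), τ i) =
        (∏ i ∈ univ.filter fun i : Fin (r - 1) => (k : ℕ) ≤ (i : ℕ), τ i) * E τ) ∧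
      M 0 / E 0 = if ∀ l : Fin r, (k : ℕ) < (l : ℕ) → a l = 0 then (1 : ℂ) else 0 := by
  classical
  obtain ⟨m, hm, hmax⟩ : ∃ m : Fin r, a m ≠ 0 ∧ ∀ l, a l ≠ 0 → l ≤ m := by
    have hne : (univ.filter fun l : Fin r => a l ≠ 0).Nonempty := ⟨k, by simp [hk]⟩
    refine ⟨(univ.filter fun l : Fin r => a l ≠ 0).max' hne, ?_, ?_⟩
    · have := Finset.max'_mem _ hne
      simpa using this
    · intro l hl
      exact Finset.le_max' _ _ (by simpa using hl)
  have hkm : k ≤ m := hmax k (by simp [hk])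
  let Q : Fin r → (Fin (r - 1) → ℂ) → ℂ := fun j τ =>
    ∏ i ∈ univ.filter fun i : Fin (r - 1) => (j : ℕ) ≤ (i : ℕ) ∧ (i : ℕ) < (m : ℕ), τ i
  have hQan : ∀ j τ, AnalyticAt ℂ (Q j) τ := by
    intro j τ
    apply Finset.analyticAt_fun_prod
    intro i _
    exact (ContinuousLinearMap.proj (R := ℂ) (φ := fun _ : Fin (r - 1) => ℂ) i).analyticAt τ
  have hQm : Q m 0 = 1 := by
    apply Finset.prod_eq_one
    intro i hi
    simp only [mem_filter] at hi
    omega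
  have hQ0 : ∀ j, j < m → Q j 0 = 0 := by
    intro j hj
    have hj' : (j : ℕ) < (m : ℕ) := hj
    have := m.isLt
    exact Finset.prod_eq_zero (i := (⟨j, by omega⟩ : Fin (r - 1))) (by simp [hj']) rfl
  have hfac : ∀ j, j ≤ m → ∀ τ : Fin (r - 1) → ℂ,
      (∏ i ∈ univ.filter fun i : Fin (r - 1) => (j : ℕ) ≤ (i : ℕ), τ i) =
      Q j τ * ∏ i ∈ univ.filter fun i : Fin (r - 1) => (m : ℕ) ≤ (i : ℕ), τ i := by
    intro j hj τ
    have hj' : (j : ℕ) ≤ (m : ℕ) := hj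
    simp only [Q]
    rw [← Finset.prod_union]
    · congr 1
      ext i
      simp only [mem_filter, mem_union, mem_univ, true_and]
      omega
    · rw [Finset.disjoint_left]
      intro i
      simp only [mem_filter, mem_univ, true_and]
      omega
  have hE0 : (∑ j : Fin r, (a j : ℂ) * Q j 0) = (a m : ℂ) := by
    rw [Finset.sum_eq_single m]
    · simp [hQm]
    · intro j _ hj
      by_cases h : a j = 0
      · simp [h]
      · rw [hQ0 j (lt_of_le_of_ne (hmax j h) hj), mul_zero]
    · simp
  refine ⟨Q k, fun τ => ∑ j : Fin r, (a j : ℂ) * Q j τ, hQan k, ?_, ?_, ?_, ?_⟩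
  · intro τ
    apply Finset.analyticAt_fun_sum
    intro j _
    exact analyticAt_const.mul (hQan j τ)
  · simp only [hE0]
    exact_mod_cast hm
  · intro τ
    rw [hfac k hkm, mul_assoc]
    congr 1
    simp only [Finset.mul_sum]
    apply Finset.sum_congr rfl
    intro j _
    by_cases h : a j = 0
    · simp [h]
    · rw [hfac j (hmax j h)]
      ring
  · simp only [hE0]
    rcases eq_or_lt_of_le hkm with h | h
    · subst h
      rw [hQm, hk, if_pos]
      · simp
      · intro l hl
        by_contra h
        have h2 : (l : ℕ) ≤ (k : ℕ) := hmax l h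
        omega
    · rw [hQ0 k h, if_neg]
      · simp
      · intro h2
        exact hm (h2 m h)

open Finset in
/-- the quotient `∏_k N_k / ∏_k D_k` coming from
`γ(λ) = ∏_k λ_k/b_k(λ)` in the variables `τ_j = λ_j/λ_{j+1}` extends
analytically across the origin of `ℂ^{r-1}`, with value `∏_k δ_k` at `0`. -/
theorem stmt3 (r p : ℕ) (hr : 1 ≤ r) (hpr : p ≤ r)
    (A : Fin p → Fin r → ℝ)
    (hA : ∀ k l, 0 ≤ A k l)
    (hdiag : ∀ k : Fin p, A k (Fin.castLE hpr k) = 1)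
    (N D : Fin p → (Fin (r - 1) → ℂ) → ℂ)
    (hN : ∀ k τ, N k τ =
      ∏ i ∈ univ.filter fun i : Fin (r - 1) => (k : ℕ) ≤ (i : ℕ), τ i)
    (hD : ∀ k τ, D k τ = ∑ j : Fin r, (A k j : ℂ) *
      ∏ i ∈ univ.filter fun i : Fin (r - 1) => (j : ℕ) ≤ (i : ℕ), τ i) :
    ∃ ε > (0 : ℝ), ∃ g : (Fin (r - 1) → ℂ) → ℂ,
      AnalyticOnNhd ℂ g (Metric.ball 0 ε) ∧
      (∀ τ ∈ Metric.ball (0 : Fin (r - 1) → ℂ) ε,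
        g τ * ∏ k : Fin p, D k τ = ∏ k : Fin p, N k τ) ∧
      g 0 = ∏ k : Fin p,
        if ∀ l : Fin r, (k : ℕ) < (l : ℕ) → A k l = 0 then (1 : ℂ) else 0 := by
  have aux := fun k : Fin p => stmt3_aux r (Fin.castLE hpr k) (A k) (hdiag k)
  choose M E hM hE hE0 hMD hval using aux
  have hcont : ContinuousAt (fun τ => ∏ k : Fin p, E k τ) 0 :=
    (Finset.analyticAt_fun_prod _ fun k _ => hE k 0).continuousAt
  have hne : ∀ᶠ τ in nhds (0 : Fin (r - 1) → ℂ), ∏ k : Fin p, E k τ ≠ 0 :=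
    hcont.eventually_ne (Finset.prod_ne_zero_iff.2 fun k _ => hE0 k)
  obtain ⟨ε, hε, hball⟩ := Metric.eventually_nhds_iff_ball.1 hne
  refine ⟨ε, hε, fun τ => ∏ k : Fin p, (M k τ / E k τ), ?_, ?_, ?_⟩
  · intro τ hτ
    apply Finset.analyticAt_fun_prod
    intro k _
    exact (hM k τ).div (hE k τ) (Finset.prod_ne_zero_iff.1 (hball τ hτ) k (mem_univ k))
  · intro τ hτ
    rw [← Finset.prod_mul_distrib]
    apply Finset.prod_congr rfl
    intro k hk
    have h := Finset.prod_ne_zero_iff.1 (hball τ hτ) k hk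
    have h2 := hMD k τ
    rw [← hD k τ] at h2
    simp only [Fin.val_castLE] at h2
    rw [← hN k τ] at h2
    rw [div_mul_eq_mul_div, h2, mul_div_assoc, div_self h, mul_one]
  · apply Finset.prod_congr rfl
    intro k _
    simpa using hval k
end

section
/- Let r ≥ 1 and 0 ≤ p ≤ r, let A be a p×r matrix of real numbers with A(k,ℓ) ≥ 0 for all k,ℓ and A(k,k) = 1 for all 1 ≤ k ≤ p, and let μ_1 > μ_2 > ⋯ > μ_r be positive integers. Set δ_k = 1 if A(k,ℓ) = 0 for all ℓ > k and δ_k = 0 otherwise. Then there exist an open set U ⊆ ℂ containing the half-axis [0,∞) and a function h : ℂ → ℂ holomorphic on U such that for every real κ > 0, h(κ) = Π_{k=1}^p ( κ^{μ_k} / Σ_{ℓ=1}^r A(k,ℓ)·κ^{μ_ℓ} ), and moreover h(0) = Π_{k=1}^p δ_k. -/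
/-- One factor of the product. -/
theorem factor_ext (r : ℕ) (a : Fin r → ℝ) (ha : ∀ l, 0 ≤ a l) (i : Fin r) (hi : a i = 1)
    (μ : Fin r → ℕ) (hμ : StrictAnti μ) :
    ∃ U : Set ℂ, IsOpen U ∧ (∀ x : ℝ, 0 ≤ x → (x : ℂ) ∈ U) ∧
      ∃ h : ℂ → ℂ, DifferentiableOn ℂ h U ∧
        (∀ κ : ℝ, 0 < κ →
          h κ = (κ : ℂ) ^ μ i / ∑ l, (a l : ℂ) * (κ : ℂ) ^ μ l) ∧
        h 0 = if ∀ l : Fin r, (i : ℕ) < (l : ℕ) → a l = 0 then (1 : ℂ) else 0 := by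
  classical
  obtain ⟨m, hm, hmax⟩ : ∃ m : Fin r, a m ≠ 0 ∧ ∀ l, a l ≠ 0 → l ≤ m := by
    have hne : (Finset.univ.filter fun l => a l ≠ 0).Nonempty := ⟨i, by simp [hi]⟩
    refine ⟨_, (Finset.mem_filter.1 (Finset.max'_mem _ hne)).2, fun l hl => ?_⟩
    exact Finset.le_max' _ _ (by simp [hl])
  have him : i ≤ m := hmax i (by simp [hi])
  have hcont : Continuous fun z : ℂ => ∑ l, (a l : ℂ) * z ^ (μ l - μ m) := by fun_prop
  -- value of the reduced denominator at zero
  have h0 : ∑ l, (a l : ℂ) * (0 : ℂ) ^ (μ l - μ m) = a m := by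
    rw [Finset.sum_eq_single m]
    · simp
    · intro l _ hl
      by_cases hal : a l = 0
      · simp [hal]
      · have := hμ (lt_of_le_of_ne (hmax l hal) hl)
        rw [zero_pow (by omega), mul_zero]
    · simp
  have hfac : ∀ z : ℂ, ∑ l, (a l : ℂ) * z ^ μ l
      = z ^ μ m * ∑ l, (a l : ℂ) * z ^ (μ l - μ m) := by
    intro z
    rw [Finset.mul_sum]
    refine Finset.sum_congr rfl fun l _ => ?_
    by_cases hal : a l = 0
    · simp [hal]
    · have h1 := hμ.antitone (hmax l hal)
      rw [mul_left_comm, ← pow_add, Nat.add_sub_cancel' h1]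
  refine ⟨{z | ∑ l, (a l : ℂ) * z ^ (μ l - μ m) ≠ 0}, isOpen_ne_fun hcont continuous_const, ?_,
    fun z => z ^ (μ i - μ m) / ∑ l, (a l : ℂ) * z ^ (μ l - μ m), ?_, ?_, ?_⟩
  · intro x hx
    rcases hx.eq_or_lt with rfl | hx
    · simp only [Set.mem_ofPred_eq, Complex.ofReal_zero]
      rw [h0]
      exact_mod_cast hm
    · have : 0 < ∑ l, a l * x ^ (μ l - μ m) := by
        refine Finset.sum_pos' (fun l _ => mul_nonneg (ha l) (by positivity))
          ⟨i, Finset.mem_univ _, ?_⟩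
        rw [hi]
        positivity
      simp only [Set.mem_ofPred_eq]
      exact_mod_cast this.ne'
  · refine DifferentiableOn.div (by fun_prop) (by fun_prop) fun z hz => hz
  · intro κ hκ
    have hk : (κ : ℂ) ≠ 0 := by exact_mod_cast hκ.ne'
    have h1 : μ i = μ m + (μ i - μ m) := by
      have := hμ.antitone him
      omega
    rw [hfac, h1, pow_add, mul_div_mul_left _ _ (pow_ne_zero _ hk)]
    simp
  · simp only []
    rw [h0]
    split_ifs with h
    · have : m = i := by
        by_contra hne
        have hlt : i < m := lt_of_le_of_ne him (Ne.symm hne)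
        exact hm (h m hlt)
      simp [this, hi]
    · have hlt : i < m := by
        push Not at h
        obtain ⟨l, hl, hl'⟩ := h
        exact lt_of_lt_of_le hl (hmax l hl')
      have := hμ hlt
      rw [zero_pow (by omega), zero_div]

open Finset in
/-- the function `κ ↦ ∏_k κ^{μ_k} / ∑_ℓ A(k,ℓ)κ^{μ_ℓ}` extends
holomorphically to a neighborhood of `[0,∞) ⊂ ℂ`, with value `∏_k δ_k` at `0`. -/
theorem stmt4 (r p : ℕ) (hr : 1 ≤ r) (hpr : p ≤ r)
    (A : Fin p → Fin r → ℝ)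
    (hA : ∀ k l, 0 ≤ A k l)
    (hdiag : ∀ k : Fin p, A k (Fin.castLE hpr k) = 1)
    (μ : Fin r → ℕ) (hμpos : ∀ l, 0 < μ l) (hμ : StrictAnti μ) :
    ∃ U : Set ℂ, IsOpen U ∧ (∀ x : ℝ, 0 ≤ x → (x : ℂ) ∈ U) ∧
      ∃ h : ℂ → ℂ, DifferentiableOn ℂ h U ∧
        (∀ κ : ℝ, 0 < κ →
          h κ = ∏ k : Fin p,
            (κ : ℂ) ^ μ (Fin.castLE hpr k) / ∑ l, (A k l : ℂ) * (κ : ℂ) ^ μ l) ∧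
        h 0 = ∏ k : Fin p,
          if ∀ l : Fin r, (k : ℕ) < (l : ℕ) → A k l = 0 then (1 : ℂ) else 0 := by
  choose U hU hx h hd hk h0 using fun k : Fin p =>
    factor_ext r (A k) (hA k) (Fin.castLE hpr k) (hdiag k) μ hμ
  refine ⟨⋂ k, U k, isOpen_iInter_of_finite hU, fun x h => Set.mem_iInter.2 fun k => hx k x h,
    fun z => ∏ k, h k z, ?_, ?_, ?_⟩
  · exact DifferentiableOn.fun_finsetProd fun k _ => (hd k).mono (Set.iInter_subset _ k)
  · intro κ hκ
    exact Finset.prod_congr rfl fun k _ => hk k κ hκ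
  · exact Finset.prod_congr rfl fun k _ => by rw [h0 k]; rfl
end

section
/- Let φ : ℂ → ℂ be a smooth (C^∞) function with compact support. Then, as λ → 0 through positive real values, λ · ∫_ℂ ‖z‖^{2λ−2} · φ(z) dA(z) → π · φ(0); in particular, for each real λ > 0 the function z ↦ ‖z‖^{2λ−2}·φ(z) is integrable on ℂ. -/
section
open MeasureTheory Set

lemma aux_int (R s : ℝ) (hR : 0 < R) (hs : -2 < s) :
    Integrable (fun z : ℂ => (Iio R).indicator (fun r : ℝ => r ^ s) ‖z‖) := by
  rw [integrable_fun_norm_addHaar (μ := (volume : Measure ℂ)) (f := (Iio R).indicator (fun r : ℝ => r ^ s))]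
  have h : IntegrableOn (fun r : ℝ => r ^ (s+1)) (Ioo 0 R) :=
    (intervalIntegral.integrableOn_Ioo_rpow_iff hR).2 (by linarith)
  have h2 : IntegrableOn ((Iio R).indicator (fun r : ℝ => r ^ (s+1))) (Ioi 0) := by
    rw [integrableOn_indicator_iff measurableSet_Iio, inter_comm, Ioi_inter_Iio]
    exact h
  refine h2.congr_fun (fun r hr => ?_) measurableSet_Ioi
  have hr : 0 < r := hr
  by_cases hrR : r < R
  · simp [indicator, hrR, Real.rpow_add hr, mul_comm]
  · simp [indicator, hrR]

lemma aux_eq (R s : ℝ) (hR : 0 < R) (hs : -2 < s) :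
    ∫ z : ℂ, (Iio R).indicator (fun r : ℝ => r ^ s) ‖z‖ = 2 * Real.pi * (R ^ (s+2) / (s+2)) := by
  rw [integral_fun_norm_addHaar (volume : Measure ℂ) ((Iio R).indicator (fun r : ℝ => r ^ s))]
  have h2 : ∫ r in Ioi (0:ℝ), r ^ (Module.finrank ℝ ℂ - 1) • (Iio R).indicator (fun r : ℝ => r ^ s) r
     = ∫ r in Ioi (0:ℝ), (Iio R).indicator (fun r : ℝ => r ^ (s+1)) r := by
    refine setIntegral_congr_fun measurableSet_Ioi (fun r hr => ?_)
    have hr : 0 < r := hr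
    by_cases hrR : r < R
    · simp [indicator, hrR, Real.rpow_add hr, mul_comm]
    · simp [indicator, hrR]
  rw [h2, setIntegral_indicator measurableSet_Iio, Ioi_inter_Iio, ← integral_Ioc_eq_integral_Ioo,
    ← intervalIntegral.integral_of_le hR.le, integral_rpow (Or.inl (by linarith))]
  have : s + 1 + 1 = s + 2 := by ring
  rw [this, Real.zero_rpow (by linarith)]
  simp [Measure.real]
  ring

end

open Filter MeasureTheory in
/-- `λ ∫_ℂ |z|^{2λ-2} φ(z) dA(z) → π φ(0)` as `λ → 0⁺`,
with integrability for each `λ > 0`. -/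
theorem stmt6 (φ : ℂ → ℂ) (hφ : ContDiff ℝ (⊤ : ℕ∞) φ) (hsupp : HasCompactSupport φ) :
    (∀ l : ℝ, 0 < l →
      Integrable (fun z : ℂ => (‖z‖ ^ (2 * l - 2) : ℝ) • φ z)) ∧
    Tendsto
      (fun l : ℝ => (l : ℂ) * ∫ z : ℂ, (‖z‖ ^ (2 * l - 2) : ℝ) • φ z)
      (nhdsWithin 0 (Set.Ioi 0))
      (nhds ((Real.pi : ℂ) * φ 0)) := by
  obtain ⟨C, hC⟩ := ContDiff.lipschitzWith_of_hasCompactSupport hsupp hφ (by simp)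
  obtain ⟨R, hR, hR'⟩ := hsupp.isBounded.subset_ball_lt 0 0
  have hφR : ∀ z : ℂ, ¬ ‖z‖ < R → φ z = 0 := by
    intro z hz
    by_contra h
    have := hR' (subset_tsupport φ h)
    simp at this
    exact hz this
  obtain ⟨M, hM⟩ := hsupp.exists_bound_of_continuous hφ.continuous
  have hcont := hφ.continuous
  have hint : ∀ l : ℝ, 0 < l →
      Integrable (fun z : ℂ => (‖z‖ ^ (2 * l - 2) : ℝ) • φ z) := by
    intro l hl
    refine ((aux_int R (2 * l - 2) hR (by linarith)).const_mul M).mono' ?_ ?_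
    · have h1 : Measurable (fun z : ℂ => (‖z‖ ^ (2 * l - 2) : ℝ)) := by fun_prop
      exact (h1.smul hcont.measurable).aestronglyMeasurable
    · refine Eventually.of_forall fun z => ?_
      by_cases hz : ‖z‖ < R
      · have h0 : 0 ≤ ‖z‖ ^ (2 * l - 2) := by positivity
        simp only [Set.indicator, Set.mem_Iio, hz, if_true]
        rw [norm_smul, Real.norm_of_nonneg h0, mul_comm]
        gcongr
        exact hM z
      · simp [hφR z hz, Set.indicator, hz]
  refine ⟨hint, ?_⟩
  have key : ∀ l : ℝ, 0 < l →
      ‖(l : ℂ) * (∫ z : ℂ, (‖z‖ ^ (2 * l - 2) : ℝ) • φ z)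
        - ((Real.pi * R ^ (2 * l) : ℝ) : ℂ) * φ 0‖
      ≤ l * (C * (2 * Real.pi * (R ^ (2 * l + 1) / (2 * l + 1)))) := by
    intro l hl
    have hK := aux_int R (2 * l - 2) hR (by linarith)
    have hKe := aux_eq R (2 * l - 2) hR (by linarith)
    have hJ := (aux_int R (2 * l - 1) hR (by linarith)).const_mul (C : ℝ)
    have hJe := aux_eq R (2 * l - 1) hR (by linarith)
    have e1 : ((Real.pi * R ^ (2 * l) : ℝ) : ℂ) * φ 0 = (l : ℂ) *
        ∫ z : ℂ, ((Set.Iio R).indicator (fun r : ℝ => r ^ (2 * l - 2)) ‖z‖) • φ 0 := by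
      rw [integral_smul_const, hKe, Complex.real_smul, ← mul_assoc, ← Complex.ofReal_mul]
      congr 2
      rw [show 2 * l - 2 + 2 = 2 * l by ring]
      field_simp
    rw [e1, ← mul_sub, ← integral_sub (hint l hl) (hK.smul_const _), norm_mul,
      Complex.norm_real, Real.norm_of_nonneg hl.le]
    gcongr
    rw [show 2 * l + 1 = 2 * l - 1 + 2 by ring, ← hJe, ← integral_const_mul]
    refine norm_integral_le_of_norm_le hJ (Eventually.of_forall fun z => ?_)
    by_cases hz : ‖z‖ < R
    · have h0 : 0 ≤ ‖z‖ ^ (2 * l - 2) := by positivity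
      simp only [Set.indicator, Set.mem_Iio, hz, if_true]
      rw [← smul_sub, norm_smul, Real.norm_of_nonneg h0]
      rcases eq_or_ne z 0 with rfl | hz0
      · simp only [sub_self, norm_zero, mul_zero]
        positivity
      · have hp : 0 < ‖z‖ := norm_pos_iff.2 hz0
        have hL := hC.norm_sub_le z 0
        rw [sub_zero] at hL
        rw [show 2 * l - 1 = (2 * l - 2) + 1 by ring, Real.rpow_add hp, Real.rpow_one]
        calc _ ≤ ‖z‖ ^ (2 * l - 2) * (C * ‖z‖) := by gcongr
          _ = _ := by ring
    · simp [hφR z hz, Set.indicator, hz]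
  have t1 : Tendsto (fun l : ℝ => l * (C * (2 * Real.pi * (R ^ (2 * l + 1) / (2 * l + 1)))))
      (nhdsWithin 0 (Set.Ioi 0)) (nhds 0) := by
    have hc : ContinuousAt
        (fun l : ℝ => l * (C * (2 * Real.pi * (R ^ (2 * l + 1) / (2 * l + 1))))) 0 := by
      have h1 : ContinuousAt (fun l : ℝ => R ^ (2 * l + 1)) 0 :=
        ContinuousAt.rpow (by fun_prop) (by fun_prop) (Or.inl hR.ne')
      have h2 : ContinuousAt (fun l : ℝ => R ^ (2 * l + 1) / (2 * l + 1)) 0 :=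
        h1.div (by fun_prop) (by norm_num)
      fun_prop
    have := hc.tendsto
    simp only [zero_mul] at this
    exact this.mono_left nhdsWithin_le_nhds
  have t2 : Tendsto (fun l : ℝ => ((Real.pi * R ^ (2 * l) : ℝ) : ℂ) * φ 0)
      (nhdsWithin 0 (Set.Ioi 0)) (nhds ((Real.pi : ℂ) * φ 0)) := by
    have hc : ContinuousAt (fun l : ℝ => ((Real.pi * R ^ (2 * l) : ℝ) : ℂ) * φ 0) 0 := by
      have h1 : ContinuousAt (fun l : ℝ => R ^ (2 * l)) 0 :=
        ContinuousAt.rpow (by fun_prop) (by fun_prop) (Or.inl hR.ne')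
      have h2 : ContinuousAt (fun l : ℝ => ((Real.pi * R ^ (2 * l) : ℝ) : ℂ)) 0 :=
        Complex.continuous_ofReal.continuousAt.comp (continuousAt_const.mul h1)
      exact h2.mul continuousAt_const
    have := hc.tendsto
    simp only [mul_zero, Real.rpow_zero, mul_one] at this
    exact this.mono_left nhdsWithin_le_nhds
  have t3 := squeeze_zero_norm' 
    (eventually_nhdsWithin_of_forall (s := Set.Ioi (0 : ℝ)) (a := 0) (fun l hl => key l hl)) t1
  have := t3.add t2
  simpa using this
end

section
/- Let φ : ℂ → ℂ be a smooth (C^∞) function with compact support and let k be a natural number. Then there exist δ > 0 and a function g : ℂ → ℂ holomorphic on the half-plane {λ ∈ ℂ : Re λ > −δ} such that for every λ ∈ ℂ with Re λ > k/2, the function z ↦ ‖z‖^{2λ} · z^{−k} · φ(z) is integrable on ℂ and g(λ) = ∫_ℂ ‖z‖^{2λ} · z^{−k} · φ(z) dA(z). -/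
open MeasureTheory Set Filter Topology

namespace Stmt7Aux

/-- The `m`-th angular Fourier coefficient (unnormalised) of `φ` on the circle of radius `r`. -/
noncomputable def Phi (m : ℤ) (φ : ℂ → ℂ) (r : ℝ) : ℂ :=
  ∫ θ in (-Real.pi)..Real.pi,
    Complex.exp (-((m : ℂ) * Complex.I) * θ) * φ (r * Complex.exp (θ * Complex.I))

/-- Wirtinger derivative `∂`. -/
noncomputable def dz (φ : ℂ → ℂ) (z : ℂ) : ℂ :=
  (fderiv ℝ φ z 1 - Complex.I * fderiv ℝ φ z Complex.I) / 2

/-- Wirtinger derivative `∂bar`. -/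
noncomputable def dzb (φ : ℂ → ℂ) (z : ℂ) : ℂ :=
  (fderiv ℝ φ z 1 + Complex.I * fderiv ℝ φ z Complex.I) / 2

lemma fderiv_apply_smooth {φ : ℂ → ℂ} (hφ : ContDiff ℝ (⊤ : ℕ∞) φ) (w : ℂ) :
    ContDiff ℝ (⊤ : ℕ∞) (fun z => fderiv ℝ φ z w) :=
  (hφ.fderiv_right (m := (⊤ : ℕ∞)) (by simp)).clm_apply contDiff_const

lemma dz_smooth {φ : ℂ → ℂ} (hφ : ContDiff ℝ (⊤ : ℕ∞) φ) : ContDiff ℝ (⊤ : ℕ∞) (dz φ) := by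
  unfold dz
  exact ((fderiv_apply_smooth hφ 1).sub
    (contDiff_const.mul (fderiv_apply_smooth hφ Complex.I))).div_const 2

lemma dzb_smooth {φ : ℂ → ℂ} (hφ : ContDiff ℝ (⊤ : ℕ∞) φ) : ContDiff ℝ (⊤ : ℕ∞) (dzb φ) := by
  unfold dzb
  exact ((fderiv_apply_smooth hφ 1).add
    (contDiff_const.mul (fderiv_apply_smooth hφ Complex.I))).div_const 2

lemma fderiv_decomp (φ : ℂ → ℂ) (z w : ℂ) :
    fderiv ℝ φ z w = w * dz φ z + (starRingEnd ℂ w) * dzb φ z := by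
  have hw : w = w.re • (1 : ℂ) + w.im • Complex.I := by
    simp [Complex.re_add_im]
  conv_lhs => rw [hw, map_add, map_smul, map_smul]
  have h2 : (starRingEnd ℂ w) = w.re - w.im * Complex.I := by
    apply Complex.ext <;> simp
  have h1 : w = w.re + w.im * Complex.I := (Complex.re_add_im w).symm
  rw [h2]
  simp only [dz, dzb, Complex.real_smul]
  linear_combination ((w.im : ℂ) * fderiv ℝ φ z Complex.I) * Complex.I_sq -
    ((fderiv ℝ φ z 1 - Complex.I * fderiv ℝ φ z Complex.I) / 2) * h1

lemma cont_integrand (m : ℤ) {φ : ℂ → ℂ} (hφ : Continuous φ) :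
    Continuous (fun p : ℝ × ℝ => Complex.exp (-((m : ℂ) * Complex.I) * p.2) *
      φ (p.1 * Complex.exp (p.2 * Complex.I))) := by fun_prop

lemma continuous_Phi (m : ℤ) {φ : ℂ → ℂ} (hφ : Continuous φ) : Continuous (Phi m φ) := by
  unfold Phi
  exact intervalIntegral.continuous_parametric_intervalIntegral_of_continuous'
    (cont_integrand m hφ) _ _

lemma deriv_integrand (m : ℤ) (φ : ℂ → ℂ) (r θ : ℝ) :
    Complex.exp (-((m : ℂ) * Complex.I) * θ) *
      fderiv ℝ φ (r * Complex.exp (θ * Complex.I)) (Complex.exp (θ * Complex.I)) =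
    Complex.exp (-(((m - 1 : ℤ) : ℂ) * Complex.I) * θ) * dz φ (r * Complex.exp (θ * Complex.I)) +
    Complex.exp (-(((m + 1 : ℤ) : ℂ) * Complex.I) * θ) * dzb φ (r * Complex.exp (θ * Complex.I))
    := by
  rw [fderiv_decomp, mul_add, ← mul_assoc, ← mul_assoc, ← Complex.exp_conj, ← Complex.exp_add,
    ← Complex.exp_add]
  congr 3
  · push_cast; ring_nf
  · simp; ring_nf

lemma hasDerivAt_Phi (m : ℤ) {φ : ℂ → ℂ} (hφ : ContDiff ℝ (⊤ : ℕ∞) φ) (r : ℝ) :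
    HasDerivAt (Phi m φ) (Phi (m - 1) (dz φ) r + Phi (m + 1) (dzb φ) r) r := by
  have c1 := cont_integrand (m - 1) (dz_smooth hφ).continuous
  have c2 := cont_integrand (m + 1) (dzb_smooth hφ).continuous
  have c := c1.add c2
  have c0 := cont_integrand m hφ.continuous
  have e : Phi (m - 1) (dz φ) r + Phi (m + 1) (dzb φ) r = ∫ θ in (-Real.pi)..Real.pi,
      (Complex.exp (-(((m - 1 : ℤ) : ℂ) * Complex.I) * θ) * dz φ (r * Complex.exp (θ * Complex.I)) +
      Complex.exp (-(((m + 1 : ℤ) : ℂ) * Complex.I) * θ) *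
        dzb φ (r * Complex.exp (θ * Complex.I))) := by
    unfold Phi
    rw [intervalIntegral.integral_add]
    · exact (c1.comp (Continuous.prodMk_right r)).intervalIntegrable _ _
    · exact (c2.comp (Continuous.prodMk_right r)).intervalIntegrable _ _
  rw [e]
  obtain ⟨C, hC⟩ := ((isCompact_Icc (a := r - 1) (b := r + 1)).prod
    (isCompact_Icc (a := -Real.pi) (b := Real.pi))).exists_bound_of_continuousOn c.continuousOn
  refine (intervalIntegral.hasDerivAt_integral_of_dominated_loc_of_deriv_le
    (F := fun (x : ℝ) (θ : ℝ) => Complex.exp (-((m : ℂ) * Complex.I) * θ) *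
      φ (x * Complex.exp (θ * Complex.I)))
    (F' := fun (x : ℝ) (θ : ℝ) =>
      (Complex.exp (-(((m - 1 : ℤ) : ℂ) * Complex.I) * θ) * dz φ (x * Complex.exp (θ * Complex.I)) +
      Complex.exp (-(((m + 1 : ℤ) : ℂ) * Complex.I) * θ) *
        dzb φ (x * Complex.exp (θ * Complex.I))))
    (bound := fun _ => C) (Icc_mem_nhds (a := r - 1) (b := r + 1) (by linarith) (by linarith))
    ?_ ?_ ?_ ?_ ?_ ?_).2
  · exact Eventually.of_forall fun x => (c0.comp (Continuous.prodMk_right x)).aestronglyMeasurable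
  · exact (c0.comp (Continuous.prodMk_right r)).intervalIntegrable _ _
  · exact (c.comp (Continuous.prodMk_right r)).aestronglyMeasurable
  · refine Eventually.of_forall fun t ht x hx => ?_
    rw [uIoc_of_le (by linarith [Real.pi_pos])] at ht
    exact hC (x, t) ⟨hx, Ioc_subset_Icc_self ht⟩
  · exact intervalIntegrable_const
  · refine Eventually.of_forall fun t ht x hx => ?_
    rw [← deriv_integrand]
    have h1 : HasDerivAt (fun x : ℝ => (x : ℂ) * Complex.exp (t * Complex.I))
        (Complex.exp (t * Complex.I)) x := by
      simpa using (Complex.ofRealCLM.hasDerivAt (x := x)).mul_const (Complex.exp (t * Complex.I))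
    have h2 := ((hφ.differentiable (by simp)) (x * Complex.exp (t * Complex.I))).hasFDerivAt
    exact (h2.comp_hasDerivAt x h1).const_mul _

lemma Phi_zero {m : ℤ} (hm : m ≠ 0) (φ : ℂ → ℂ) : Phi m φ 0 = 0 := by
  unfold Phi
  simp only [Complex.ofReal_zero, zero_mul]
  rw [intervalIntegral.integral_mul_const, integral_exp_mul_complex (by simp [hm])]
  have : Complex.exp (-((m : ℂ) * Complex.I) * (Real.pi : ℝ)) =
      Complex.exp (-((m : ℂ) * Complex.I) * ((-Real.pi : ℝ) : ℂ)) := by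
    rw [Complex.exp_eq_exp_iff_exists_int]
    exact ⟨-m, by push_cast; ring⟩
  rw [this]; simp

lemma Phi_bound (n : ℕ) : ∀ (m : ℤ) (φ : ℂ → ℂ), ContDiff ℝ (⊤ : ℕ∞) φ → n ≤ m.natAbs →
    ∃ C : ℝ, 0 ≤ C ∧ ∀ r ∈ Icc (0 : ℝ) 1, ‖Phi m φ r‖ ≤ C * r ^ n := by
  induction n with
  | zero =>
    intro m φ hφ _
    obtain ⟨C, hC⟩ := (isCompact_Icc (a := (0 : ℝ)) (b := 1)).exists_bound_of_continuousOn
      (continuous_Phi m hφ.continuous).continuousOn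
    exact ⟨C, (norm_nonneg _).trans (hC 0 (by simp)), fun r hr => by simpa using hC r hr⟩
  | succ n ih =>
    intro m φ hφ hm
    obtain ⟨C1, h1, hC1⟩ := ih (m - 1) (dz φ) (dz_smooth hφ) (by omega)
    obtain ⟨C2, h2, hC2⟩ := ih (m + 1) (dzb φ) (dzb_smooth hφ) (by omega)
    refine ⟨C1 + C2, by positivity, fun r hr => ?_⟩
    have := norm_image_sub_le_of_norm_deriv_le_segment' (f := Phi m φ) (a := 0) (b := r)
      (C := (C1 + C2) * r ^ n)
      (fun x _ => (hasDerivAt_Phi m hφ x).hasDerivWithinAt) (fun x hx => ?_) r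
      (right_mem_Icc.2 hr.1)
    · rw [Phi_zero (by omega)] at this
      simpa [pow_succ, mul_assoc] using this
    · have hx' : x ∈ Icc (0 : ℝ) 1 := ⟨hx.1, hx.2.le.trans hr.2⟩
      have hp : x ^ n ≤ r ^ n := pow_le_pow_left₀ hx.1 hx.2.le n
      calc _ ≤ C1 * x ^ n + C2 * x ^ n :=
            (norm_add_le _ _).trans (add_le_add (hC1 x hx') (hC2 x hx'))
        _ ≤ _ := by rw [← add_mul]; gcongr

lemma integrand_bound {φ : ℂ → ℂ} {k : ℕ} {C R : ℝ} (hC : ∀ z, ‖φ z‖ ≤ C)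
    (hR : ∀ z, R < ‖z‖ → φ z = 0) {l : ℂ} (hl : (k : ℝ) / 2 < l.re) (z : ℂ) :
    ‖((‖z‖ ^ 2 : ℝ) : ℂ) ^ l * z ^ (-(k : ℤ)) * φ z‖ ≤ |R| ^ (2 * l.re - k) * C := by
  have hC0 : 0 ≤ C := (norm_nonneg _).trans (hC 0)
  have hl0 : 0 < l.re := lt_of_le_of_lt (by positivity) hl
  by_cases hz : z = 0
  · have : l ≠ 0 := by rintro rfl; simp at hl0
    subst hz
    simp [Complex.zero_cpow this]
    positivity
  by_cases hzR : R < ‖z‖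
  · rw [hR z hzR]; simp; positivity
  have hzp : 0 < ‖z‖ := norm_pos_iff.2 hz
  rw [norm_mul, norm_mul, Complex.norm_cpow_eq_rpow_re_of_pos (by positivity), norm_zpow]
  have : (‖z‖ ^ 2) ^ l.re * ‖z‖ ^ (-(k : ℤ)) = ‖z‖ ^ (2 * l.re - k) := by
    rw [← Real.rpow_natCast, ← Real.rpow_mul hzp.le, ← Real.rpow_intCast, ← Real.rpow_add hzp]
    push_cast; ring_nf
  rw [this]
  push Not at hzR
  have := Real.rpow_le_rpow hzp.le (hzR.trans (le_abs_self R)) (by linarith : 0 ≤ 2 * l.re - k)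
  exact mul_le_mul this (hC z) (norm_nonneg _) (by positivity)

lemma integrand_meas {φ : ℂ → ℂ} (hφ : Continuous φ) (k : ℕ) (l : ℂ) :
    Measurable (fun z : ℂ => ((‖z‖ ^ 2 : ℝ) : ℂ) ^ l * z ^ (-(k : ℤ)) * φ z) := by
  have := hφ.measurable
  have h1 : Measurable (fun z : ℂ => z ^ (-(k : ℤ))) := by
    simp only [zpow_neg, zpow_natCast]; fun_prop
  have h2 : Measurable (fun z : ℂ => ((‖z‖ ^ 2 : ℝ) : ℂ) ^ l) := by
    apply Measurable.pow_const; fun_prop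
  exact (h2.mul h1).mul this

lemma polar_eq (k : ℕ) (φ : ℂ → ℂ) (l : ℂ) {r : ℝ} (hr : 0 < r) (θ : ℝ) :
    r • (((‖Complex.polarCoord.symm (r, θ)‖ ^ 2 : ℝ) : ℂ) ^ l *
      (Complex.polarCoord.symm (r, θ)) ^ (-(k : ℤ)) * φ (Complex.polarCoord.symm (r, θ))) =
    (r : ℂ) ^ (2 * l - k + 2 - 1) * (Complex.exp (-(((k : ℤ) : ℂ) * Complex.I) * θ) *
      φ (r * Complex.exp (θ * Complex.I))) := by
  have hp : Complex.polarCoord.symm (r, θ) = r * Complex.exp (θ * Complex.I) := by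
    rw [Complex.polarCoord_symm_apply, Complex.exp_mul_I]; push_cast; rfl
  have hr0 : (r : ℂ) ≠ 0 := by exact_mod_cast hr.ne'
  rw [Complex.norm_polarCoord_symm, hp, abs_of_pos hr, mul_zpow, ← Complex.exp_int_mul,
    Complex.real_smul]
  have h1 : ((r ^ 2 : ℝ) : ℂ) ^ l = (r : ℂ) ^ (2 * l) := by
    rw [pow_two, Complex.ofReal_mul, Complex.mul_cpow_ofReal_nonneg hr.le hr.le,
      ← Complex.cpow_add _ _ hr0, two_mul]
  have h2 : (r : ℂ) ^ (2 * l - k + 2 - 1) = (r : ℂ) ^ (2 * l) * (r : ℂ) ^ (-(k : ℤ)) * r := by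
    rw [show 2 * l - k + 2 - 1 = 2 * l + ((-(k : ℤ) : ℤ) : ℂ) + 1 by push_cast; ring,
      Complex.cpow_add _ _ hr0, Complex.cpow_add _ _ hr0, Complex.cpow_intCast, Complex.cpow_one]
  rw [h1, h2]
  have h3 : ((-(k : ℤ) : ℤ) : ℂ) * (θ * Complex.I) = -(((k : ℤ) : ℂ) * Complex.I) * θ := by
    push_cast; ring
  rw [h3]
  ring

end Stmt7Aux

open Stmt7Aux

open MeasureTheory in
/-- `λ ↦ ∫_ℂ |z|^{2λ} z^{-k} φ(z) dA(z)`, defined for `Re λ > k/2`,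
extends holomorphically to a half-plane `{Re λ > -δ}`. -/
theorem stmt7 (φ : ℂ → ℂ) (hφ : ContDiff ℝ (⊤ : ℕ∞) φ) (hsupp : HasCompactSupport φ)
    (k : ℕ) :
    ∃ δ > (0 : ℝ), ∃ g : ℂ → ℂ,
      DifferentiableOn ℂ g {l : ℂ | -δ < l.re} ∧
      ∀ l : ℂ, (k : ℝ) / 2 < l.re →
        Integrable (fun z : ℂ => ((‖z‖ ^ 2 : ℝ) : ℂ) ^ l * z ^ (-(k : ℤ)) * φ z) ∧
        g l = ∫ z : ℂ, ((‖z‖ ^ 2 : ℝ) : ℂ) ^ l * z ^ (-(k : ℤ)) * φ z := by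
  obtain ⟨C, hC⟩ := hsupp.exists_bound_of_continuous hφ.continuous
  obtain ⟨R, hR⟩ : ∃ R : ℝ, ∀ z, R < ‖z‖ → φ z = 0 := by
    obtain ⟨R, hR⟩ := hsupp.isCompact.isBounded.subset_closedBall 0
    refine ⟨R, fun z hz => ?_⟩
    by_contra h
    have := hR (subset_tsupport _ (Function.mem_support.2 h))
    simp at this
    linarith
  refine ⟨1, one_pos, fun l => mellin (Phi (k : ℤ) φ) (2 * l - k + 2), ?_, ?_⟩
  · intro l hl
    simp only [mem_ofPred_eq] at hl
    apply DifferentiableAt.differentiableWithinAt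
    have hd : DifferentiableAt ℂ (mellin (Phi (k : ℤ) φ)) (2 * l - k + 2) := by
      refine mellin_differentiableAt_of_isBigO_rpow (a := (2 * l - k + 2).re + 1) (b := -k)
        ?_ ?_ (by linarith) ?_ (by simp; linarith)
      · exact (continuous_Phi _ hφ.continuous).locallyIntegrable.locallyIntegrableOn _
      · have : Phi (k : ℤ) φ =ᶠ[atTop] 0 := by
          filter_upwards [eventually_gt_atTop R, eventually_gt_atTop 0] with r hr hr0
          simp only [Phi, Pi.zero_apply]
          rw [intervalIntegral.integral_congr (g := fun _ => 0), intervalIntegral.integral_zero]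
          intro θ _
          simp only
          rw [hR, mul_zero]
          simpa [Complex.norm_exp_ofReal_mul_I, abs_of_pos hr0] using hr
        exact this.trans_isBigO (Asymptotics.isBigO_zero _ _)
      · obtain ⟨B, hB0, hB⟩ := Phi_bound k k φ hφ (by simp)
        refine Asymptotics.IsBigO.of_bound B ?_
        filter_upwards [Ioo_mem_nhdsGT (zero_lt_one' ℝ)] with r hr
        rw [neg_neg, Real.rpow_natCast, Real.norm_of_nonneg (pow_nonneg hr.1.le _)]
        exact hB r ⟨hr.1.le, hr.2.le⟩
    exact hd.comp (f := fun l : ℂ => 2 * l - k + 2) l (by fun_prop)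
  · intro l hl
    set f : ℂ → ℂ := fun z : ℂ => ((‖z‖ ^ 2 : ℝ) : ℂ) ^ l * z ^ (-(k : ℤ)) * φ z with hf
    set M := |R| ^ (2 * l.re - k) * C with hM
    have hbd : ∀ z, ‖f z‖ ≤ M := integrand_bound hC hR hl
    have hM0 : 0 ≤ M := (norm_nonneg _).trans (hbd 0)
    have hmeas : Measurable f := integrand_meas hφ.continuous k l
    have hf0 : ∀ z, R < ‖z‖ → f z = 0 := fun z hz => by simp [hf, hR z hz]
    constructor
    · rw [← integrableOn_iff_integrable_of_support_subset (s := Metric.closedBall 0 R)]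
      · exact Measure.integrableOn_of_bounded (M := M) (measure_closedBall_lt_top).ne
          hmeas.aestronglyMeasurable (Eventually.of_forall hbd)
      · intro z hz
        by_contra h
        simp at h
        exact hz (hf0 z h)
    · have hpm : Measurable (fun p : ℝ × ℝ => p.1 • f (Complex.polarCoord.symm p)) := by
        apply Measurable.smul measurable_fst
        apply hmeas.comp
        have : (Complex.polarCoord.symm : ℝ × ℝ → ℂ) = fun p : ℝ × ℝ =>
            (p.1 * (Real.cos p.2 + Real.sin p.2 * Complex.I) : ℂ) :=
          funext Complex.polarCoord_symm_apply
        rw [this]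
        fun_prop
      have hint : IntegrableOn (fun p : ℝ × ℝ => p.1 • f (Complex.polarCoord.symm p))
          (Ioi 0 ×ˢ Ioo (-Real.pi) Real.pi) (volume.prod volume) := by
        have h1 : IntegrableOn (fun p : ℝ × ℝ => p.1 • f (Complex.polarCoord.symm p))
            (Ioc 0 R ×ˢ Ioo (-Real.pi) Real.pi) (volume.prod volume) := by
          refine Measure.integrableOn_of_bounded (M := R * M) ?_ hpm.aestronglyMeasurable ?_
          · rw [Measure.prod_prod]
            simp [ENNReal.mul_eq_top]
          · refine (ae_restrict_iff' (measurableSet_Ioc.prod measurableSet_Ioo)).2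
              (Eventually.of_forall fun p hp => ?_)
            rw [norm_smul, Real.norm_of_nonneg hp.1.1.le]
            exact mul_le_mul hp.1.2 (hbd _) (norm_nonneg _) (hp.1.1.le.trans hp.1.2)
        refine h1.of_forall_sdiff_eq_zero (measurableSet_Ioi.prod measurableSet_Ioo) ?_
        rintro ⟨r, θ⟩ ⟨⟨h1, h2⟩, h3⟩
        have hr : R < r := by
          by_contra h
          exact h3 ⟨⟨h1, not_lt.1 h⟩, h2⟩
        have hr0 : 0 < r := h1
        rw [hf0, smul_zero]
        rw [Complex.norm_polarCoord_symm, abs_of_pos hr0]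
        exact hr
      rw [← Complex.integral_comp_polarCoord_symm]
      rw [show polarCoord.target = Ioi (0 : ℝ) ×ˢ Ioo (-Real.pi) Real.pi from rfl,
        Measure.volume_eq_prod, setIntegral_prod _ hint]
      unfold mellin
      refine setIntegral_congr_fun measurableSet_Ioi fun r hr => ?_
      simp only [smul_eq_mul]
      rw [Phi, intervalIntegral.integral_of_le (by linarith [Real.pi_pos]),
        integral_Ioc_eq_integral_Ioo, ← integral_const_mul]
      exact setIntegral_congr_fun measurableSet_Ioo fun θ _ => (polar_eq k φ l hr θ).symm
end

section
/- Let n ≥ 1, let φ : ℂ^n → ℂ be a smooth (C^∞) function with compact support, and let m_1,…,m_n be natural numbers. Then there exist δ > 0 and a function g : ℂ^n → ℂ analytic on the open set {s = (s_1,…,s_n) ∈ ℂ^n : Re s_k > −δ for all k} such that for every s ∈ ℂ^n with Re s_k > m_k/2 for all k, the function z ↦ Π_{k=1}^n ‖z_k‖^{2 s_k} · z_k^{−m_k} · φ(z) is integrable on ℂ^n and g(s) = ∫_{ℂ^n} Π_{k=1}^n ‖z_k‖^{2 s_k} · z_k^{−m_k} · φ(z) dV(z). Moreover, if m_1 = ⋯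 = m_n = 0 then g(0) = ∫_{ℂ^n} φ dV. -/
open MeasureTheory

noncomputable def KK (s : ℂ) (m : ℕ) (z : ℂ) : ℂ := ((‖z‖ ^ 2 : ℝ) : ℂ) ^ s * z ^ (-(m : ℤ))

def KGood (s : ℂ) (m : ℕ) : Prop := (s = 0 ∧ m = 0) ∨ (m : ℝ) < 2 * s.re

lemma KGood.re_nonneg {s : ℂ} {m : ℕ} (h : KGood s m) : 0 ≤ s.re := by
  rcases h with ⟨rfl, -⟩ | h
  · simp
  · have : (0 : ℝ) ≤ m := by positivity
    linarith

lemma KGood.add {s : ℂ} {m : ℕ} (h : KGood s m) (j : ℕ) : KGood (s + j) (m + j) := by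
  rcases h with ⟨rfl, rfl⟩ | h
  · rcases Nat.eq_zero_or_pos j with rfl | hj
    · left; simp
    · right
      have : (0 : ℝ) < j := by exact_mod_cast hj
      simp; linarith
  · right
    have : (0 : ℝ) ≤ j := by positivity
    simp; linarith

lemma norm_KK {s : ℂ} {m : ℕ} {z : ℂ} (hz : z ≠ 0) : ‖KK s m z‖ = ‖z‖ ^ (2 * s.re - m) := by
  have h0 : 0 < ‖z‖ := norm_pos_iff.mpr hz
  unfold KK
  rw [norm_mul, Complex.norm_cpow_eq_rpow_re_of_pos (by positivity), norm_zpow,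
    Real.rpow_sub h0, Real.rpow_mul h0.le, zpow_neg, zpow_natCast, Real.rpow_natCast, div_eq_mul_inv]
  norm_cast

lemma KK_zero {s : ℂ} {m : ℕ} (h : s ≠ 0) : KK s m 0 = 0 := by
  simp [KK, Complex.zero_cpow h]

lemma norm_KK' {s : ℂ} {m : ℕ} (h : (m : ℝ) < 2 * s.re) (z : ℂ) :
    ‖KK s m z‖ = ‖z‖ ^ (2 * s.re - m) := by
  by_cases hz : z = 0
  · subst hz
    have hs : s ≠ 0 := by
      rintro rfl
      simp at h
      have : (0 : ℝ) ≤ m := by positivity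
      linarith
    rw [KK_zero hs, norm_zero, Real.zero_rpow (by linarith)]
  · exact norm_KK hz

lemma continuousAt_KK {s : ℂ} {m : ℕ} {z : ℂ} (hz : z ≠ 0) : ContinuousAt (KK s m) z := by
  have h0 : 0 < ‖z‖ := norm_pos_iff.mpr hz
  unfold KK
  apply ContinuousAt.mul
  · apply ContinuousAt.cpow (by fun_prop) continuousAt_const
    exact Complex.ofReal_mem_slitPlane.mpr (by positivity)
  · exact continuousAt_zpow₀ _ _ (Or.inl hz)

lemma measurable_KK {s : ℂ} {m : ℕ} : Measurable (KK s m) := by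
  unfold KK
  fun_prop

lemma KGood.continuous {s : ℂ} {m : ℕ} (h : KGood s m) : Continuous (KK s m) := by
  rcases h with ⟨rfl, rfl⟩ | h
  · unfold KK; simp; fun_prop
  · rw [continuous_iff_continuousAt]
    intro z
    by_cases hz : z = 0
    · subst hz
      have hp : 0 < 2 * s.re - m := by linarith
      have h0 : KK s m 0 = 0 := by
        rw [← norm_eq_zero, norm_KK' h, norm_zero, Real.zero_rpow hp.ne']
      rw [ContinuousAt, h0, tendsto_zero_iff_norm_tendsto_zero]
      simp_rw [norm_KK' h]
      have : Continuous fun z : ℂ => ‖z‖ ^ (2 * s.re - m) :=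
        continuous_norm.rpow_const (fun _ => Or.inr hp.le)
      have := this.tendsto 0
      rwa [norm_zero, Real.zero_rpow hp.ne'] at this
    · exact continuousAt_KK hz

lemma KK_succ {s : ℂ} {m : ℕ} (h : s + 1 ≠ 0) (z : ℂ) :
    KK (s + 1) (m + 1) z = KK s m z * (starRingEnd ℂ) z := by
  by_cases hz : z = 0
  · subst hz; simp [KK_zero h]
  · unfold KK
    have h1 : ((‖z‖ ^ 2 : ℝ) : ℂ) ≠ 0 := by simpa using hz
    rw [Complex.cpow_add _ _ h1, Complex.cpow_one]
    have h2 : ((‖z‖ ^ 2 : ℝ) : ℂ) = z * (starRingEnd ℂ) z := by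
      rw [Complex.mul_conj']; push_cast; rfl
    have h3 : z ^ (-((m + 1 : ℕ) : ℤ)) = z ^ (-(m : ℤ)) * z⁻¹ := by
      rw [← zpow_neg_one, ← zpow_add₀ hz]; congr 1; push_cast; ring
    rw [h3]
    nth_rewrite 2 [h2]
    field_simp

lemma hasDerivAt_KK_ne {s : ℂ} {m : ℕ} {z : ℂ} (hz : z ≠ 0) (v : ℂ) :
    HasDerivAt (fun t : ℝ => KK (s + 1) (m + 1) (z + t * v))
      ((s - m) * v * KK (s + 1) (m + 2) z + (s + 1) * (starRingEnd ℂ) v * KK s m z) 0 := by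
  have e : (fun t : ℝ => KK (s + 1) (m + 1) (z + t * v)) = fun t : ℝ =>
      (fun τ : ℂ => ((z + τ * v) * ((starRingEnd ℂ) z + τ * (starRingEnd ℂ) v)) ^ (s + 1)
        * (z + τ * v) ^ (-((m + 1 : ℕ) : ℤ))) (t : ℂ) := by
    funext t
    unfold KK
    have : ((‖z + t * v‖ ^ 2 : ℝ) : ℂ)
        = (z + t * v) * ((starRingEnd ℂ) z + t * (starRingEnd ℂ) v) := by
      push_cast
      rw [← Complex.mul_conj']; simp
    rw [this]
  rw [e]
  have h2 : z * (starRingEnd ℂ) z = ((‖z‖ ^ 2 : ℝ) : ℂ) := by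
    rw [Complex.mul_conj']; push_cast; rfl
  have h0 : 0 < ‖z‖ := norm_pos_iff.mpr hz
  have hN : ((‖z‖ ^ 2 : ℝ) : ℂ) ≠ 0 := by simpa using hz
  have hlin : HasDerivAt (fun τ : ℂ => z + τ * v) v 0 := by
    simpa using ((hasDerivAt_id (0 : ℂ)).mul_const v).const_add z
  have hlin' : HasDerivAt (fun τ : ℂ => (starRingEnd ℂ) z + τ * (starRingEnd ℂ) v)
      ((starRingEnd ℂ) v) 0 := by
    simpa using ((hasDerivAt_id (0 : ℂ)).mul_const ((starRingEnd ℂ) v)).const_add ((starRingEnd ℂ) z)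
  have hM : HasDerivAt (fun τ : ℂ => (z + τ * v) * ((starRingEnd ℂ) z + τ * (starRingEnd ℂ) v))
      (v * (starRingEnd ℂ) z + z * (starRingEnd ℂ) v) 0 := by
    refine (hlin.mul hlin').congr_deriv ?_
    simp
  have hA : HasDerivAt (fun τ : ℂ => ((z + τ * v) * ((starRingEnd ℂ) z + τ * (starRingEnd ℂ) v)) ^ (s + 1))
      ((s + 1) * ((‖z‖ ^ 2 : ℝ) : ℂ) ^ s * (v * (starRingEnd ℂ) z + z * (starRingEnd ℂ) v)) 0 := by
    refine (hM.cpow_const (c := s + 1) ?_).congr_deriv ?_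
    · rw [zero_mul, zero_mul, add_zero, add_zero, h2]
      exact Complex.ofReal_mem_slitPlane.mpr (by positivity)
    · rw [zero_mul, zero_mul, add_zero, add_zero, h2, add_sub_cancel_right]
  have hB : HasDerivAt (fun τ : ℂ => (z + τ * v) ^ (-((m + 1 : ℕ) : ℤ)))
      (((-((m + 1 : ℕ) : ℤ) : ℤ) : ℂ) * z ^ (-((m + 1 : ℕ) : ℤ) - 1) * v) 0 := by
    have := HasDerivAt.comp (0 : ℂ) (hasDerivAt_zpow (-((m + 1 : ℕ) : ℤ)) (z + 0 * v)
      (Or.inl (by simpa using hz))) hlin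
    refine this.congr_deriv ?_
    rw [zero_mul, add_zero]
  have hC := HasDerivAt.comp_ofReal (z := 0) (by rw [Complex.ofReal_zero]; exact hA.mul hB)
  refine hC.congr_deriv ?_
  simp only [zero_mul, add_zero, h2]
  unfold KK
  rw [Complex.cpow_add _ _ hN, Complex.cpow_one]
  have h3 : z ^ (-((m + 1 : ℕ) : ℤ)) = z ^ (-(m : ℤ)) * z⁻¹ := by
    rw [← zpow_neg_one, ← zpow_add₀ hz]; congr 1; push_cast; ring
  have h4 : z ^ (-((m + 2 : ℕ) : ℤ)) = z ^ (-(m : ℤ)) * z⁻¹ * z⁻¹ := by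
    rw [← zpow_neg_one, ← zpow_add₀ hz, ← zpow_add₀ hz]; congr 1; push_cast; ring
  have h5 : z ^ (-((m + 1 : ℕ) : ℤ) - 1) = z ^ (-(m : ℤ)) * z⁻¹ * z⁻¹ := by
    rw [← zpow_neg_one, ← zpow_add₀ hz, ← zpow_add₀ hz]; congr 1; push_cast; ring
  rw [h3, h4, h5]
  generalize ((‖z‖ ^ 2 : ℝ) : ℂ) ^ s = A
  rw [← h2]
  push_cast
  field_simp
  ring

lemma hasDerivAt_KK {s : ℂ} {m : ℕ} (h : KGood s m) (z v : ℂ) :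
    HasDerivAt (fun t : ℝ => KK (s + 1) (m + 1) (z + t * v))
      ((s - m) * v * KK (s + 1) (m + 2) z + (s + 1) * (starRingEnd ℂ) v * KK s m z) 0 := by
  by_cases hz : z = 0
  · have hs : s + 1 ≠ 0 := by
      intro h'
      have := congrArg Complex.re h'
      have := h.re_nonneg
      simp at *; linarith
    subst hz
    rw [KK_zero hs]
    have hval : (s - m) * v * 0 + (s + 1) * (starRingEnd ℂ) v * KK s m 0
        = KK s m 0 * (starRingEnd ℂ) v := by
      by_cases h0 : s = 0
      · subst h0; ring
      · rw [KK_zero h0]; ring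
    rw [hval, hasDerivAt_iff_tendsto_slope_zero]
    have hc : Continuous fun t : ℝ => KK s m (t * v) * (starRingEnd ℂ) v := by
      have := h.continuous
      fun_prop
    have := (hc.tendsto 0).mono_left (nhdsWithin_le_nhds (s := {0}ᶜ))
    simp only [Complex.ofReal_zero, zero_mul] at this
    refine this.congr' ?_
    filter_upwards [self_mem_nhdsWithin] with t ht
    have ht : (t : ℂ) ≠ 0 := by simpa using ht
    simp only [zero_add, Complex.ofReal_zero, zero_mul, KK_zero hs, sub_zero, KK_succ hs]
    simp
    field_simp
  · exact hasDerivAt_KK_ne hz v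

/-- continuity of the derivative -/
lemma KGood.continuous_deriv {s : ℂ} {m : ℕ} (h : KGood s m) (v : ℂ) :
    Continuous fun z => (s - m) * v * KK (s + 1) (m + 2) z + (s + 1) * (starRingEnd ℂ) v * KK s m z := by
  have h1 := h.continuous
  rcases h with ⟨rfl, rfl⟩ | h
  · simp only [Nat.cast_zero, sub_zero, zero_mul, zero_add]; fun_prop
  · have : KGood (s + 1) (m + 2) := by right; simp; linarith
    have := this.continuous
    fun_prop

noncomputable def dbar {n : ℕ} (k : Fin n) (φ : (Fin n → ℂ) → ℂ) (z : Fin n → ℂ) : ℂ :=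
  fderiv ℝ φ z (Pi.single k 1) + Complex.I * fderiv ℝ φ z (Pi.single k Complex.I)

lemma dbar_contDiff {n : ℕ} (k : Fin n) {φ : (Fin n → ℂ) → ℂ} (hφ : ContDiff ℝ (⊤ : ℕ∞) φ) :
    ContDiff ℝ (⊤ : ℕ∞) (dbar k φ) := by
  have h : ContDiff ℝ (⊤ : ℕ∞) (fderiv ℝ φ) := hφ.fderiv_right (by simp)
  unfold dbar
  exact (h.clm_apply contDiff_const).add (contDiff_const.mul (h.clm_apply contDiff_const))

lemma fderiv_apply_supp {n : ℕ} {φ : (Fin n → ℂ) → ℂ} (hs : HasCompactSupport φ) (v : Fin n → ℂ) :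
    HasCompactSupport (fun z => fderiv ℝ φ z v) := hs.fderiv_apply ℝ v

lemma dbar_supp {n : ℕ} (k : Fin n) {φ : (Fin n → ℂ) → ℂ} (hs : HasCompactSupport φ) :
    HasCompactSupport (dbar k φ) := by
  unfold dbar
  exact (fderiv_apply_supp hs _).add ((fderiv_apply_supp hs _).mul_left (f := fun _ => Complex.I))

noncomputable def PK {n : ℕ} (s : Fin n → ℂ) (m : Fin n → ℕ) (z : Fin n → ℂ) : ℂ :=
  ∏ k, KK (s k) (m k) (z k)

lemma PK_continuous {n : ℕ} {s : Fin n → ℂ} {m : Fin n → ℕ} (h : ∀ k, KGood (s k) (m k)) :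
    Continuous (PK s m) := by
  unfold PK
  exact continuous_finsetProd _ fun k _ => (h k).continuous.comp (continuous_apply k)

lemma PK_update {n : ℕ} (s : Fin n → ℂ) (m : Fin n → ℕ) (k : Fin n) (a : ℂ) (b : ℕ) (z : Fin n → ℂ) :
    PK (Function.update s k a) (Function.update m k b) z =
      KK a b (z k) * ∏ j ∈ Finset.univ.erase k, KK (s j) (m j) (z j) := by
  unfold PK
  rw [← Finset.mul_prod_erase _ _ (Finset.mem_univ k)]
  simp only [Function.update_self]
  congr 1
  refine Finset.prod_congr rfl fun j hj => ?_
  have := Finset.ne_of_mem_erase hj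
  simp [Function.update_of_ne this]

lemma ibp_dir {n : ℕ} {s : Fin n → ℂ} {m : Fin n → ℕ} (h : ∀ k, KGood (s k) (m k))
    {φ : (Fin n → ℂ) → ℂ} (hφ : ContDiff ℝ (⊤ : ℕ∞) φ) (hs : HasCompactSupport φ) (k : Fin n) (v : ℂ) :
    ∫ z, PK (Function.update s k (s k + 1)) (Function.update m k (m k + 1)) z *
        fderiv ℝ φ z (Pi.single k v) =
      - ∫ z, (((s k - m k) * v * KK (s k + 1) (m k + 2) (z k)
        + (s k + 1) * (starRingEnd ℂ) v * KK (s k) (m k) (z k)) *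
          ∏ j ∈ Finset.univ.erase k, KK (s j) (m j) (z j)) * φ z := by
  have hφd : Differentiable ℝ φ := hφ.differentiable (by simp)
  have hφ' : Continuous fun z => fderiv ℝ φ z (Pi.single k v) :=
    (hφ.continuous_fderiv (by simp)).clm_apply continuous_const
  have hQ : Continuous fun z : Fin n → ℂ => ∏ j ∈ Finset.univ.erase k, KK (s j) (m j) (z j) :=
    continuous_finsetProd _ fun j _ => (h j).continuous.comp (continuous_apply j)
  have hP : Continuous (PK (Function.update s k (s k + 1)) (Function.update m k (m k + 1))) := by
    apply PK_continuous
    intro j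
    by_cases hj : j = k
    · subst hj; simpa using (h j).add 1
    · simpa [Function.update_of_ne hj] using h j
  have hD : Continuous fun z : Fin n → ℂ => (((s k - m k) * v * KK (s k + 1) (m k + 2) (z k)
        + (s k + 1) * (starRingEnd ℂ) v * KK (s k) (m k) (z k)) *
          ∏ j ∈ Finset.univ.erase k, KK (s j) (m j) (z j)) :=
    (((h k).continuous_deriv v).comp (continuous_apply k)).mul hQ
  refine integral_bilinear_hasLineDerivAt_right_eq_neg_left_of_integrable (v := Pi.single k v)
    (B := ContinuousLinearMap.mul ℝ ℂ) (μ := volume) ?_ ?_ ?_ ?_ ?_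
  · exact (hD.mul hφ.continuous).integrable_of_hasCompactSupport hs.mul_left
  · exact (hP.mul hφ').integrable_of_hasCompactSupport (fderiv_apply_supp hs _).mul_left
  · exact (hP.mul hφ.continuous).integrable_of_hasCompactSupport hs.mul_left
  · intro z _
    unfold HasLineDerivAt
    have := (hasDerivAt_KK (h k) (z k) v).mul_const
      (∏ j ∈ Finset.univ.erase k, KK (s j) (m j) (z j))
    refine this.congr_of_eventuallyEq (Filter.Eventually.of_forall fun t => ?_)
    dsimp only
    rw [PK_update]
    congr 1
    · simp
    · refine Finset.prod_congr rfl fun j hj => ?_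
      have := Finset.ne_of_mem_erase hj
      simp [this]
  · intro z _
    exact (hφd z).hasFDerivAt.hasLineDerivAt _

lemma ibp_step {n : ℕ} {s : Fin n → ℂ} {m : Fin n → ℕ} (h : ∀ k, KGood (s k) (m k))
    {φ : (Fin n → ℂ) → ℂ} (hφ : ContDiff ℝ (⊤ : ℕ∞) φ) (hs : HasCompactSupport φ) (k : Fin n) :
    ∫ z, PK s m z * φ z = (-(2 * (s k + 1))⁻¹) *
      ∫ z, PK (Function.update s k (s k + 1)) (Function.update m k (m k + 1)) z * dbar k φ z := by
  have hs1 : s k + 1 ≠ 0 := by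
    intro h'
    have := congrArg Complex.re h'
    have := (h k).re_nonneg
    simp at *; linarith
  have hP : Continuous (PK (Function.update s k (s k + 1)) (Function.update m k (m k + 1))) := by
    apply PK_continuous
    intro j
    by_cases hj : j = k
    · subst hj; simpa using (h j).add 1
    · simpa [Function.update_of_ne hj] using h j
  have hQ : Continuous fun z : Fin n → ℂ => ∏ j ∈ Finset.univ.erase k, KK (s j) (m j) (z j) :=
    continuous_finsetProd _ fun j _ => (h j).continuous.comp (continuous_apply j)
  have hi : ∀ v, Integrable fun z => PK (Function.update s k (s k + 1))
      (Function.update m k (m k + 1)) z * fderiv ℝ φ z (Pi.single k v) := fun v =>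
    (hP.mul ((hφ.continuous_fderiv (by simp)).clm_apply continuous_const)).integrable_of_hasCompactSupport
      (fderiv_apply_supp hs _).mul_left
  have hj : ∀ v, Integrable fun z => (((s k - m k) * v * KK (s k + 1) (m k + 2) (z k)
        + (s k + 1) * (starRingEnd ℂ) v * KK (s k) (m k) (z k)) *
          ∏ j ∈ Finset.univ.erase k, KK (s j) (m j) (z j)) * φ z := fun v =>
    (((((h k).continuous_deriv v).comp (continuous_apply k)).mul hQ).mul
      hφ.continuous).integrable_of_hasCompactSupport hs.mul_left
  have e : ∫ z, PK (Function.update s k (s k + 1)) (Function.update m k (m k + 1)) z * dbar k φ z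
      = -(2 * (s k + 1)) * ∫ z, PK s m z * φ z := by
    unfold dbar
    have : ∀ z, PK (Function.update s k (s k + 1)) (Function.update m k (m k + 1)) z *
        (fderiv ℝ φ z (Pi.single k 1) + Complex.I * fderiv ℝ φ z (Pi.single k Complex.I)) =
        PK (Function.update s k (s k + 1)) (Function.update m k (m k + 1)) z *
          fderiv ℝ φ z (Pi.single k 1) + Complex.I *
        (PK (Function.update s k (s k + 1)) (Function.update m k (m k + 1)) z *
          fderiv ℝ φ z (Pi.single k Complex.I)) := fun z => by ring
    simp_rw [this]
    rw [integral_add (hi _) ((hi _).const_mul _), integral_const_mul, ibp_dir h hφ hs,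
      ibp_dir h hφ hs, mul_neg, ← neg_add, ← integral_const_mul, ← integral_add (hj _)
      ((hj _).const_mul _), neg_mul, ← integral_const_mul]
    congr 2
    funext z
    have : PK s m z = KK (s k) (m k) (z k) * ∏ j ∈ Finset.univ.erase k, KK (s j) (m j) (z j) := by
      unfold PK
      rw [← Finset.mul_prod_erase _ _ (Finset.mem_univ k)]
    rw [this]
    simp only [map_one, Complex.conj_I]
    linear_combination ((s k - m k) * KK (s k + 1) (m k + 2) (z k) -
      (s k + 1) * KK (s k) (m k) (z k)) *
      (∏ j ∈ Finset.univ.erase k, KK (s j) (m j) (z j)) * φ z * Complex.I_mul_I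
  rw [e]
  field_simp

lemma ibp_iter {n : ℕ} (m : Fin n → ℕ)
    {φ : (Fin n → ℂ) → ℂ} (hφ : ContDiff ℝ (⊤ : ℕ∞) φ) (hs : HasCompactSupport φ) (T : ℕ) :
    ∀ N : Fin n → ℕ, ∑ k, N k = T →
    ∃ ψ : (Fin n → ℂ) → ℂ, ContDiff ℝ (⊤ : ℕ∞) ψ ∧ HasCompactSupport ψ ∧
    ∃ c : (Fin n → ℂ) → ℂ, AnalyticOnNhd ℂ c {s | ∀ k, -1 < (s k).re} ∧
    ∀ s : Fin n → ℂ, (∀ k, KGood (s k) (m k)) →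
      ∫ z, PK s m z * φ z = c s * ∫ z, PK (fun k => s k + N k) (fun k => m k + N k) z * ψ z := by
  induction T with
  | zero =>
    intro N hN
    have hN : ∀ k, N k = 0 := by simpa using hN
    refine ⟨φ, hφ, hs, fun _ => 1, analyticOnNhd_const, fun s _ => ?_⟩
    simp [hN]
  | succ T ih =>
    intro N hN
    obtain ⟨k, hk⟩ : ∃ k, N k ≠ 0 := by
      by_contra! h
      simp [h] at hN
    obtain ⟨b, hb⟩ := Nat.exists_eq_succ_of_ne_zero hk
    obtain ⟨ψ, h1, h2, c, h3, h4⟩ := ih (Function.update N k b) (by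
      rw [← Finset.add_sum_erase _ _ (Finset.mem_univ k)] at hN ⊢
      rw [Finset.sum_congr rfl (g := N) (fun j hj => by
        rw [Function.update_of_ne (Finset.ne_of_mem_erase hj)])]
      have hN' : N k + (Finset.univ.erase k).sum N = T + 1 := hN
      simp only [Function.update_self]
      omega)
    refine ⟨dbar k ψ, dbar_contDiff k h1, dbar_supp k h2,
      fun s => c s * (-(2 * (s k + b + 1))⁻¹), ?_, ?_⟩
    · apply h3.mul
      intro s hs
      apply AnalyticAt.neg
      apply AnalyticAt.inv
      · have : AnalyticAt ℂ (fun s : Fin n → ℂ => s k) s :=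
          (ContinuousLinearMap.proj (R := ℂ) (φ := fun _ : Fin n => ℂ) k).analyticAt s
        exact analyticAt_const.mul ((this.add analyticAt_const).add analyticAt_const)
      · intro h'
        have h' := congrArg Complex.re (by simpa using h' : s k + b + 1 = 0)
        have hs := hs k
        have : (0 : ℝ) ≤ b := by positivity
        simp at h'; linarith
    · intro s hg
      rw [h4 s hg, ibp_step (fun j => (hg j).add _) h1 h2 k, mul_assoc]
      congr 2
      · simp
      · congr 1
        funext z
        congr 2
        · funext j
          by_cases hj : j = k
          · subst hj; simp [hb]; ring
          · simp [hj]
        · funext j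
          by_cases hj : j = k
          · subst hj; simp [hb]; ring
          · simp [hj]

lemma analyticAt_laplace {α E : Type*} [MeasurableSpace α] {μ : Measure α}
    [NormedAddCommGroup E] [NormedSpace ℂ E]
    (L : α → (E →L[ℂ] ℂ)) (f : α → ℂ) (hL : AEStronglyMeasurable L μ) (hf : AEStronglyMeasurable f μ)
    (r : NNReal) (hr : 0 < r) (hint : Integrable (fun x => Real.exp (r * ‖L x‖) * ‖f x‖) μ) :
    AnalyticAt ℂ (fun h => ∫ x, Complex.exp (L x h) * f x ∂μ) 0 := by
  let q : ∀ j : ℕ, α → ContinuousMultilinearMap ℂ (fun _ : Fin j => E) ℂ := fun j x =>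
    (f x / (j.factorial : ℂ)) •
      (ContinuousMultilinearMap.mkPiAlgebraFin ℂ j ℂ).compContinuousLinearMap (fun _ => L x)
  have hqm : ∀ j, AEStronglyMeasurable (q j) μ := by
    intro j
    have hc : Continuous fun l : E →L[ℂ] ℂ =>
        (ContinuousMultilinearMap.mkPiAlgebraFin ℂ j ℂ).compContinuousLinearMap (fun _ => l) := by
      have h1 := (ContinuousMultilinearMap.compContinuousLinearMapContinuousMultilinear ℂ
        (fun _ : Fin j => E) (fun _ : Fin j => ℂ) ℂ).cont
      have h2 : Continuous fun l : E →L[ℂ] ℂ => (fun _ : Fin j => l) := by fun_prop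
      exact ((ContinuousLinearMap.apply ℂ _
        (ContinuousMultilinearMap.mkPiAlgebraFin ℂ j ℂ)).continuous).comp (h1.comp h2)
    have hf' : AEStronglyMeasurable (fun x => f x / (j.factorial : ℂ)) μ := by
      simpa only [div_eq_mul_inv] using hf.mul_const _
    exact hf'.smul (hc.comp_aestronglyMeasurable hL)
  have hqb : ∀ j x, ‖q j x‖ ≤ ‖f x‖ * (‖L x‖ ^ j / (j.factorial : ℝ)) := by
    intro j x
    have := (ContinuousMultilinearMap.mkPiAlgebraFin ℂ j ℂ).norm_compContinuousLinearMap_le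
      (fun _ => L x)
    simp only [ContinuousMultilinearMap.norm_mkPiAlgebraFin, one_mul, Finset.prod_const,
      Finset.card_univ, Fintype.card_fin] at this
    simp only [q]
    rw [norm_smul, norm_div, Complex.norm_natCast, div_mul_eq_mul_div, mul_div_assoc]
    gcongr
  have hqr : ∀ j x, ‖q j x‖ * (r : ℝ) ^ j ≤ Real.exp (r * ‖L x‖) * ‖f x‖ := by
    intro j x
    have h1 := Real.pow_div_factorial_le_exp (x := r * ‖L x‖) (by positivity) j
    calc ‖q j x‖ * (r : ℝ) ^ j ≤ (‖f x‖ * (‖L x‖ ^ j / (j.factorial : ℝ))) * (r : ℝ) ^ j := by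
          gcongr; exact hqb j x
      _ = ((r * ‖L x‖) ^ j / (j.factorial : ℝ)) * ‖f x‖ := by rw [mul_pow]; ring
      _ ≤ _ := by gcongr
  have hr' : (0 : ℝ) < r := hr
  have hqi : ∀ j, Integrable (q j) μ := by
    intro j
    refine (hint.const_mul (((r : ℝ) ^ j)⁻¹)).mono' (hqm j) (Filter.Eventually.of_forall fun x => ?_)
    have := hqr j x
    rw [inv_mul_eq_div, le_div_iff₀ (by positivity)]
    exact this
  let p : FormalMultilinearSeries ℂ E ℂ := fun j => ∫ x, q j x ∂μ
  refine HasFPowerSeriesAt.analyticAt (p := p) ⟨r, ?_, by exact_mod_cast hr, ?_⟩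
  · refine p.le_radius_of_bound (∫ x, Real.exp (r * ‖L x‖) * ‖f x‖ ∂μ) fun j => ?_
    calc ‖p j‖ * (r : ℝ) ^ j ≤ (∫ x, ‖q j x‖ ∂μ) * (r : ℝ) ^ j := by
          gcongr; exact norm_integral_le_integral_norm _
      _ = ∫ x, ‖q j x‖ * (r : ℝ) ^ j ∂μ := (integral_mul_const _ _).symm
      _ ≤ _ := integral_mono ((hqi j).norm.mul_const _) hint (hqr j)
  · intro y hy
    have hy : ‖y‖ ≤ r := by
      have : ‖y‖ < r := by simpa using hy
      exact this.le
    have e1 : ∀ j : ℕ, (p j fun _ => y) = ∫ x, f x * ((L x y) ^ j / (j.factorial : ℂ)) ∂μ := by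
      intro j
      simp only [p]
      rw [ContinuousMultilinearMap.integral_apply (hqi j)]
      congr 1
      funext x
      simp [q]
      ring
    simp_rw [e1, zero_add]
    have hs : ∀ x, HasSum (fun j : ℕ => ‖f x‖ * ((r * ‖L x‖) ^ j / (j.factorial : ℝ)))
        (‖f x‖ * Real.exp (r * ‖L x‖)) := fun x => by
      have := NormedSpace.expSeries_div_hasSum_exp (r * ‖L x‖)
      rw [← Real.exp_eq_exp_ℝ] at this
      exact this.mul_left _
    refine hasSum_integral_of_dominated_convergence
      (fun j x => ‖f x‖ * ((r * ‖L x‖) ^ j / (j.factorial : ℝ))) ?_ ?_ ?_ ?_ ?_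
    · intro j
      have := (ContinuousLinearMap.apply ℂ ℂ y).continuous.comp_aestronglyMeasurable hL
      simp_rw [div_eq_mul_inv]
      exact hf.mul ((this.pow j).mul_const _)
    · intro j
      refine Filter.Eventually.of_forall fun x => ?_
      rw [norm_mul, norm_div, norm_pow, Complex.norm_natCast]
      gcongr
      rw [mul_comm]
      exact (L x).le_of_opNorm_le_of_le le_rfl hy
    · exact Filter.Eventually.of_forall fun x => (hs x).summable
    · simp_rw [fun x => (hs x).tsum_eq]
      simpa only [mul_comm] using hint
    · refine Filter.Eventually.of_forall fun x => ?_
      have := NormedSpace.expSeries_div_hasSum_exp (L x y)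
      rw [← Complex.exp_eq_exp_ℂ] at this
      rw [mul_comm (Complex.exp _)]
      exact this.mul_left _

lemma factor_bound {x R p : ℝ} (hx : 0 ≤ x) (hxR : x ≤ R) (hR : 1 ≤ R) (hp : 1 / 4 < p) :
    Real.exp (1 / 8 * |Real.log (x ^ 2)|) * x ^ p ≤ R ^ (p + 1 / 4) := by
  rcases hx.eq_or_lt with rfl | hx
  · rw [Real.zero_rpow (by linarith)]
    simp; positivity
  · rw [Real.rpow_def_of_pos hx, Real.rpow_def_of_pos (by linarith), ← Real.exp_add,
      Real.exp_le_exp, Real.log_pow]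
    have h1 := Real.log_le_log hx hxR
    have h2 := Real.log_nonneg hR
    push_cast
    rcases le_total (Real.log x) 0 with h | h
    · rw [abs_of_nonpos (by linarith)]
      nlinarith
    · rw [abs_of_nonneg (by linarith)]
      nlinarith

noncomputable def LL {n : ℕ} (z : Fin n → ℂ) : (Fin n → ℂ) →L[ℂ] ℂ :=
  ∑ k, ((Real.log (‖z k‖ ^ 2) : ℝ) : ℂ) • ContinuousLinearMap.proj (R := ℂ) (φ := fun _ : Fin n => ℂ) k

lemma LL_apply {n : ℕ} (z h : Fin n → ℂ) : LL z h = ∑ k, ((Real.log (‖z k‖ ^ 2) : ℝ) : ℂ) * h k := by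
  simp [LL]

lemma LL_norm {n : ℕ} (z : Fin n → ℂ) : ‖LL z‖ ≤ ∑ k, |Real.log (‖z k‖ ^ 2)| := by
  refine ContinuousLinearMap.opNorm_le_bound _ (by positivity) fun h => ?_
  rw [LL_apply, Finset.sum_mul]
  refine (norm_sum_le _ _).trans (Finset.sum_le_sum fun k _ => ?_)
  rw [norm_mul, Complex.norm_real, Real.norm_eq_abs]
  gcongr
  exact norm_le_pi_norm h k

lemma LL_meas {n : ℕ} : AEStronglyMeasurable (LL : (Fin n → ℂ) → _) volume := by
  unfold LL
  refine Finset.aestronglyMeasurable_fun_sum _ fun k _ => ?_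
  apply AEStronglyMeasurable.smul_const
  apply Measurable.aestronglyMeasurable
  fun_prop

lemma KK_shift {a b : ℂ} (ha : a ≠ 0) (hb : b ≠ 0) (M : ℕ) (z : ℂ) :
    KK b M z = Complex.exp ((Real.log (‖z‖ ^ 2) : ℝ) * (b - a)) * KK a M z := by
  by_cases hz : z = 0
  · subst hz; rw [KK_zero ha, KK_zero hb, mul_zero]
  · have h1 : ((‖z‖ ^ 2 : ℝ) : ℂ) ≠ 0 := by simpa using hz
    unfold KK
    rw [Complex.ofReal_log (by positivity), ← Complex.cpow_def_of_ne_zero h1, ← mul_assoc,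
      ← Complex.cpow_add _ _ h1]
    congr 2; ring

lemma analyticAt_PK {n : ℕ} (m : Fin n → ℕ) {ψ : (Fin n → ℂ) → ℂ} (hψ : Continuous ψ)
    (hs : HasCompactSupport ψ) (s₀ : Fin n → ℂ) (h₀ : ∀ k, -(1 / 4) < (s₀ k).re) :
    AnalyticAt ℂ (fun s : Fin n → ℂ => ∫ z, PK (fun k => s k + (m k + 1 : ℕ))
      (fun k => m k + (m k + 1)) z * ψ z) s₀ := by
  set f : (Fin n → ℂ) → ℂ := fun z => PK (fun k => s₀ k + (m k + 1 : ℕ))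
      (fun k => m k + (m k + 1)) z * ψ z with hf
  have hfm : AEStronglyMeasurable f volume := by
    apply AEStronglyMeasurable.mul _ hψ.aestronglyMeasurable
    apply Measurable.aestronglyMeasurable
    unfold PK
    exact Finset.measurable_fun_prod _ fun k _ => measurable_KK.comp (measurable_pi_apply k)
  have hre : ∀ s : ℂ, -(1 / 4) < s.re → ∀ M : ℕ, s + (M + 1 : ℕ) ≠ 0 := by
    intro s hs M h
    have h := congrArg Complex.re h
    have : (0 : ℝ) ≤ M := by positivity
    simp at h; linarith
  obtain ⟨R, hR1, hR⟩ : ∃ R : ℝ, 1 ≤ R ∧ ∀ z, ψ z ≠ 0 → ‖z‖ ≤ R := by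
    obtain ⟨R, hR⟩ := hs.isCompact.isBounded.exists_norm_le
    exact ⟨max R 1, le_max_right _ _, fun z hz =>
      (hR z (subset_tsupport _ hz)).trans (le_max_left _ _)⟩
  have key : AnalyticAt ℂ (fun h => ∫ z, Complex.exp (LL z h) * f z) 0 := by
    refine analyticAt_laplace LL f LL_meas hfm (1 / 8) (by norm_num) ?_
    have hI : Integrable (fun z => (∏ k, R ^ ((2 * (s₀ k).re + 1) + 1 / 4)) * ‖ψ z‖) :=
      ((hψ.integrable_of_hasCompactSupport hs).norm).const_mul _
    refine hI.mono' ?_ (Filter.Eventually.of_forall fun z => ?_)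
    · refine AEStronglyMeasurable.mul ?_ hfm.norm
      exact Real.continuous_exp.comp_aestronglyMeasurable (LL_meas.norm.const_mul _)
    · rw [Real.norm_of_nonneg (by positivity)]
      by_cases hz : ψ z = 0
      · simp [hf, hz]
      · have hzR := hR z hz
        rw [hf]
        simp only
        rw [norm_mul, ← mul_assoc]
        gcongr
        have e : Real.exp (((1 / 8 : NNReal) : ℝ) * ‖LL z‖) ≤
            ∏ k, Real.exp (1 / 8 * |Real.log (‖z k‖ ^ 2)|) := by
          rw [← Real.exp_sum, Real.exp_le_exp, ← Finset.mul_sum]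
          have := LL_norm z
          push_cast
          gcongr
        unfold PK
        rw [norm_prod]
        refine (mul_le_mul_of_nonneg_right e (by positivity)).trans ?_
        rw [← Finset.prod_mul_distrib]
        refine Finset.prod_le_prod (fun k _ => by positivity) fun k _ => ?_
        have hk := h₀ k
        rw [norm_KK' (by push_cast; simp; linarith)]
        have e2 : 2 * (s₀ k + ((m k + 1 : ℕ) : ℂ)).re - ((m k + (m k + 1) : ℕ) : ℝ)
            = 2 * (s₀ k).re + 1 := by
          push_cast; simp; ring
        rw [e2]
        exact factor_bound (norm_nonneg _) ((norm_le_pi_norm z k).trans hzR) hR1 (by linarith)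
  have hcomp : AnalyticAt ℂ (fun s : Fin n → ℂ => ∫ z, Complex.exp (LL z (s - s₀)) * f z) s₀ :=
    AnalyticAt.comp_of_eq' (g := fun h => ∫ z, Complex.exp (LL z h) * f z)
      (f := fun s => s - s₀) key (analyticAt_id.sub analyticAt_const) (sub_self _)
  refine hcomp.congr ?_
  have hopen : IsOpen {s : Fin n → ℂ | ∀ k, -(1 / 4) < (s k).re} := by
    simp only [Set.setOf_forall]
    exact isOpen_iInter_of_finite fun k => isOpen_lt continuous_const (by fun_prop)
  filter_upwards [hopen.mem_nhds h₀] with s hs'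
  congr 1
  funext z
  rw [hf]
  simp only
  rw [← mul_assoc]
  congr 1
  unfold PK
  rw [LL_apply, Complex.exp_sum, ← Finset.prod_mul_distrib]
  refine Finset.prod_congr rfl fun k _ => ?_
  rw [KK_shift (hre _ (h₀ k) (m k)) (hre _ (hs' k) (m k))]
  congr 3
  simp



open MeasureTheory in
/-- tensor-product analytic continuation of
`s ↦ ∫_{ℂ^n} ∏_k |z_k|^{2s_k} z_k^{-m_k} φ(z) dV(z)` to `{Re s_k > -δ ∀k}`,
with value `∫ φ` at `s = 0` when all `m_k = 0`. -/
theorem stmt8 (n : ℕ) (hn : 1 ≤ n)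
    (φ : (Fin n → ℂ) → ℂ) (hφ : ContDiff ℝ (⊤ : ℕ∞) φ) (hsupp : HasCompactSupport φ)
    (m : Fin n → ℕ) :
    ∃ δ > (0 : ℝ), ∃ g : (Fin n → ℂ) → ℂ,
      AnalyticOnNhd ℂ g {s : Fin n → ℂ | ∀ k, -δ < (s k).re} ∧
      (∀ s : Fin n → ℂ, (∀ k, (m k : ℝ) / 2 < (s k).re) →
        Integrable (fun z : Fin n → ℂ =>
          (∏ k, ((‖z k‖ ^ 2 : ℝ) : ℂ) ^ (s k) * (z k) ^ (-(m k : ℤ))) * φ z) ∧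
        g s = ∫ z : Fin n → ℂ,
          (∏ k, ((‖z k‖ ^ 2 : ℝ) : ℂ) ^ (s k) * (z k) ^ (-(m k : ℤ))) * φ z) ∧
      ((∀ k, m k = 0) → g 0 = ∫ z : Fin n → ℂ, φ z) := by
  have _ := hn
  obtain ⟨ψ, h1, h2, c, h3, h4⟩ := ibp_iter m hφ hsupp _ (fun k => m k + 1) rfl
  refine ⟨1 / 4, by norm_num, fun s => c s * ∫ z, PK (fun k => s k + (m k + 1 : ℕ))
      (fun k => m k + (m k + 1)) z * ψ z, ?_, ?_, ?_⟩
  · intro s hs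
    exact (h3 s fun k => by have := hs k; linarith).mul (analyticAt_PK m h1.continuous h2 s hs)
  · intro s hs
    have hg : ∀ k, KGood (s k) (m k) := fun k => Or.inr (by have := hs k; linarith)
    exact ⟨((PK_continuous hg).mul hφ.continuous).integrable_of_hasCompactSupport hsupp.mul_left,
      (h4 s hg).symm⟩
  · intro hm
    have hg : ∀ k, KGood ((0 : Fin n → ℂ) k) (m k) := fun k => Or.inl ⟨rfl, hm k⟩
    refine (h4 0 hg).symm.trans ?_
    congr 1
    funext z
    simp [PK, KK, hm]
end
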